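/- arXiv:math/0702046 — 11 statements merged into one kernel-verified Lean document; each statement's English description precedes it below -/
import Mathlib

section
/- Let a, b be n×n matrices over R with a² = b² = 1, such that every entry of a lies in the prime subring of R (the image of the canonical map ℤ → R) and a ≡ b (mod J). Set V₀ = ((1+a)/2)·R^n, V₁ = ((1−a)/2)·R^n, V₀' = ((1+b)/2)·R^n, V₁' = ((1−b)/2)·R^n; these are free R-modules, and the rank of V₀' equals the rank of V₀ and the rank of V₁' equals the rank of V₁. -/
lemma range_free_of_idem {R : Type*} [CommRing R] [IsLocalRing R] {n : ℕ}
    (e : Matrix (Fin n) (Fin n) R) (he : e * e = e) :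
    Module.Free R (LinearMap.range e.mulVecLin) := by
  have hp : Module.Projective R (LinearMap.range e.mulVecLin) := by
    refine Module.Projective.of_split (LinearMap.range e.mulVecLin).subtype
      e.mulVecLin.rangeRestrict ?_
    ext ⟨x, y, rfl⟩ : 1
    apply Subtype.ext
    simp [Matrix.mulVec_mulVec, he]
  exact Module.free_of_flat_of_isLocalRing

lemma range_rank_of_idem {R : Type*} [CommRing R] [IsLocalRing R] {n : ℕ}
    (e f : Matrix (Fin n) (Fin n) R) (he : e * e = e) (hf : f * f = f)
    (h : f.map (IsLocalRing.residue R) = e.map (IsLocalRing.residue R)) :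
    Module.rank R (LinearMap.range f.mulVecLin) =
      Module.rank R (LinearMap.range e.mulVecLin) := by
  set u := f * e + (1 - f) * (1 - e) with hu
  have hcomm : u * e = f * u := by
    have h1 : u * e = f * e := by
      rw [hu, add_mul, mul_assoc, mul_assoc, he, sub_mul 1 e e, he]; simp
    have h2 : f * u = f * e := by
      rw [hu, mul_add, ← mul_assoc, ← mul_assoc, hf, mul_sub f 1 f, hf]; simp
    rw [h1, h2]
  have hdet : IsUnit u.det := by
    rw [← isUnit_map_iff (IsLocalRing.residue R), RingHom.map_det]
    have h' : (IsLocalRing.residue R).mapMatrix f = (IsLocalRing.residue R).mapMatrix e := h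
    have he' := congrArg (IsLocalRing.residue R).mapMatrix he
    rw [map_mul] at he'
    have : (IsLocalRing.residue R).mapMatrix u = 1 := by
      rw [hu]
      simp only [map_add, map_mul, map_sub, map_one, h']
      simp only [mul_sub, sub_mul, he', mul_one, one_mul]
      abel
    rw [this]; simp
  have hun : IsUnit u := (Matrix.isUnit_iff_isUnit_det u).2 hdet
  have hbij : Function.Bijective u.mulVecLin :=
    ⟨Matrix.mulVec_injective_of_isUnit hun, Matrix.mulVec_surjective_iff_isUnit.2 hun⟩
  let U := LinearEquiv.ofBijective u.mulVecLin hbij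
  have hmap : (LinearMap.range e.mulVecLin).map (U : (Fin n → R) →ₗ[R] (Fin n → R)) =
      LinearMap.range f.mulVecLin := by
    have hU : (U : (Fin n → R) →ₗ[R] (Fin n → R)) = u.mulVecLin := rfl
    rw [hU, ← LinearMap.range_comp, ← Matrix.mulVecLin_mul, hcomm, Matrix.mulVecLin_mul,
      LinearMap.range_comp_of_range_eq_top _ (LinearMap.range_eq_top.2 hbij.2)]
  rw [← hmap]
  exact (U.submoduleMap (LinearMap.range e.mulVecLin)).rank_eq.symm

lemma idem_of_invol {R : Type*} [CommRing R] [Invertible (2 : R)] {n : ℕ}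
    (a : Matrix (Fin n) (Fin n) R) (ha : a * a = 1) :
    (⅟(2 : R) • (1 + a)) * (⅟(2 : R) • (1 + a)) = ⅟(2 : R) • (1 + a) := by
  have h : (1 + a) * (1 + a) = (2 : R) • (1 + a) := by
    rw [two_smul, mul_add, add_mul, add_mul, ha]; simp only [one_mul, mul_one]; abel
  rw [smul_mul_smul_comm, h, smul_smul, mul_assoc, invOf_mul_self, mul_one]

lemma map_of_cong {R : Type*} [CommRing R] [IsLocalRing R] [Invertible (2 : R)] {n : ℕ}
    (a b : Matrix (Fin n) (Fin n) R)
    (hab : ∀ i j, (a - b) i j ∈ IsLocalRing.maximalIdeal R) :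
    (⅟(2 : R) • (1 + b)).map (IsLocalRing.residue R) =
      (⅟(2 : R) • (1 + a)).map (IsLocalRing.residue R) := by
  ext i j
  have h := (IsLocalRing.residue_eq_zero_iff _).2 (hab i j)
  rw [Matrix.sub_apply, map_sub, sub_eq_zero] at h
  simp [h]

/-- Let `a, b` be `n × n` matrices over a commutative local ring `R`
(with `2` invertible, maximal ideal `J`) with `a² = b² = 1`, all entries of `a` in the
prime subring of `R` (the image of `ℤ → R`), and `a ≡ b (mod J)`.  Set
`V₀ = ((1+a)/2)·R^n`, `V₁ = ((1-a)/2)·R^n`, `V₀' = ((1+b)/2)·R^n`, `V₁' = ((1-b)/2)·R^n`.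
These are free `R`-modules, the rank of `V₀'` equals the rank of `V₀`, and the rank of
`V₁'` equals the rank of `V₁`. -/
theorem stmt2 {R : Type*} [CommRing R] [IsLocalRing R] [Invertible (2 : R)]
    {n : ℕ} (a b : Matrix (Fin n) (Fin n) R) (ha : a * a = 1) (hb : b * b = 1)
    (haZ : ∀ i j, a i j ∈ Set.range (Int.cast : ℤ → R))
    (hab : ∀ i j, (a - b) i j ∈ IsLocalRing.maximalIdeal R) :
    let V0 := LinearMap.range (⅟(2 : R) • ((1 : Matrix (Fin n) (Fin n) R) + a)).mulVecLin
    let V1 := LinearMap.range (⅟(2 : R) • ((1 : Matrix (Fin n) (Fin n) R) - a)).mulVecLin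
    let V0' := LinearMap.range (⅟(2 : R) • ((1 : Matrix (Fin n) (Fin n) R) + b)).mulVecLin
    let V1' := LinearMap.range (⅟(2 : R) • ((1 : Matrix (Fin n) (Fin n) R) - b)).mulVecLin
    Module.Free R V0 ∧ Module.Free R V1 ∧ Module.Free R V0' ∧ Module.Free R V1' ∧
    Module.rank R V0' = Module.rank R V0 ∧ Module.rank R V1' = Module.rank R V1 := by
  intro V0 V1 V0' V1'
  have ha' : (-a) * (-a) = 1 := by rw [neg_mul_neg, ha]
  have hb' : (-b) * (-b) = 1 := by rw [neg_mul_neg, hb]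
  have hab' : ∀ i j, (-a - -b) i j ∈ IsLocalRing.maximalIdeal R := by
    intro i j
    have h := neg_mem (hab i j)
    have e : (-a - -b) i j = -((a - b) i j) := by
      simp only [Matrix.sub_apply, Matrix.neg_apply]; ring
    rw [e]; exact h
  have ia' := idem_of_invol _ ha'
  have ib' := idem_of_invol _ hb'
  have hm' := map_of_cong _ _ hab'
  rw [← sub_eq_add_neg] at ia' ib'
  rw [← sub_eq_add_neg, ← sub_eq_add_neg] at hm'
  exact ⟨range_free_of_idem _ (idem_of_invol a ha), range_free_of_idem _ ia',
    range_free_of_idem _ (idem_of_invol b hb), range_free_of_idem _ ib',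
    range_rank_of_idem _ _ (idem_of_invol a ha) (idem_of_invol b hb) (map_of_cong a b hab),
    range_rank_of_idem _ _ ia' ib' hm'⟩
end

section
/- Let d₁, …, d_r be diagonal n×n matrices over R each of whose diagonal entries is 1 or −1, and let a₁, …, a_r be pairwise commuting n×n matrices over R with aᵢ² = 1 and aᵢ ≡ dᵢ (mod J) for each i. Then there exists g ∈ GL_n(R) with g ≡ 1 (mod J) such that g·aᵢ·g⁻¹ = dᵢ for every i = 1, …, r. -/
open Matrix

/-- Let `d₁, …, d_r` be diagonal `n × n` matrices over a commutative
local ring `R` (with `2` invertible, maximal ideal `J`), each diagonal entry being `1`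
or `-1`, and let `a₁, …, a_r` be pairwise commuting `n × n` matrices over `R` with
`aᵢ² = 1` and `aᵢ ≡ dᵢ (mod J)`.  Then there is `g ∈ GL_n(R)` with `g ≡ 1 (mod J)`
such that `g·aᵢ·g⁻¹ = dᵢ` for every `i`. -/
theorem stmt3 {R : Type*} [CommRing R] [IsLocalRing R] [Invertible (2 : R)]
    {n r : ℕ} (δ : Fin r → Fin n → R)
    (hδ : ∀ i j, δ i j = 1 ∨ δ i j = -1)
    (a : Fin r → Matrix (Fin n) (Fin n) R)
    (hcomm : ∀ i j, a i * a j = a j * a i)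
    (hsq : ∀ i, a i * a i = 1)
    (hmod : ∀ i p q, (a i - Matrix.diagonal (δ i)) p q ∈ IsLocalRing.maximalIdeal R) :
    ∃ g : GL (Fin n) R,
      (∀ p q, ((g : Matrix (Fin n) (Fin n) R) - 1) p q ∈ IsLocalRing.maximalIdeal R) ∧
      ∀ i, (g : Matrix (Fin n) (Fin n) R) * a i * ((g⁻¹ : GL (Fin n) R) : Matrix (Fin n) (Fin n) R)
        = Matrix.diagonal (δ i) := by
  classical
  have hD : ∀ i, Matrix.diagonal (δ i) * Matrix.diagonal (δ i) = (1 : Matrix (Fin n) (Fin n) R) := by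
    intro i
    rw [Matrix.diagonal_mul_diagonal, ← Matrix.diagonal_one]
    congr 1
    funext j
    rcases hδ i j with h | h <;> simp [h]
  have hDc : ∀ i j, Matrix.diagonal (δ i) * Matrix.diagonal (δ j)
      = Matrix.diagonal (δ j) * Matrix.diagonal (δ i) := by
    intro i j
    simp only [Matrix.diagonal_mul_diagonal, mul_comm]
  have hiff : ∀ A B : Matrix (Fin n) (Fin n) R,
      (IsLocalRing.residue R).mapMatrix A = (IsLocalRing.residue R).mapMatrix B ↔
      ∀ p q, (A - B) p q ∈ IsLocalRing.maximalIdeal R := by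
    intro A B
    rw [← Matrix.ext_iff]
    refine forall_congr' fun p => forall_congr' fun q => ?_
    rw [← IsLocalRing.residue_eq_zero_iff, Matrix.sub_apply, map_sub, sub_eq_zero]
    rfl
  have key : ∀ s : Finset (Fin r), ∃ g : Matrix (Fin n) (Fin n) R,
      (IsLocalRing.residue R).mapMatrix g = 1 ∧
      ∀ i ∈ s, Matrix.diagonal (δ i) * g = g * a i := by
    intro s
    induction s using Finset.induction_on with
    | empty => exact ⟨1, map_one _, by simp⟩
    | insert k s hk ih =>
      obtain ⟨g, hg, hs⟩ := ih
      refine ⟨(⅟2 : R) • (g + Matrix.diagonal (δ k) * g * a k), ?_, ?_⟩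
      · have h1 : (IsLocalRing.residue R).mapMatrix (a k)
            = (IsLocalRing.residue R).mapMatrix (Matrix.diagonal (δ k)) :=
          (hiff _ _).2 (hmod k)
        rw [Matrix.smul_eq_diagonal_mul, map_mul, map_add, map_mul, map_mul, hg, h1, mul_one,
          ← map_mul, hD, map_one, ← map_one (IsLocalRing.residue R).mapMatrix, ← map_add,
          ← map_mul, ← Matrix.smul_eq_diagonal_mul, ← two_smul R, smul_smul, invOf_mul_self,
          one_smul]
      · intro i hi
        rw [Matrix.mul_smul, Matrix.smul_mul, mul_add, add_mul]
        congr 1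
        rcases Finset.mem_insert.1 hi with rfl | hi
        · rw [mul_assoc _ (a i) (a i), hsq, mul_one, ← mul_assoc, ← mul_assoc, hD, one_mul,
            add_comm]
        · rw [hs i hi, mul_assoc _ (a k) (a i), hcomm k i, ← mul_assoc, ← mul_assoc, hDc i k,
            mul_assoc _ _ g, hs i hi]
          simp only [mul_assoc]
  obtain ⟨g, hg, hs⟩ := key Finset.univ
  have hu : IsUnit g := by
    rw [Matrix.isUnit_iff_isUnit_det]
    apply isUnit_of_map_unit (IsLocalRing.residue R)
    rw [RingHom.map_det, hg, Matrix.det_one]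
    exact isUnit_one
  obtain ⟨u, rfl⟩ := hu
  refine ⟨u, (hiff _ _).1 (by rw [hg, map_one]), fun i => ?_⟩
  rw [← hs i (Finset.mem_univ i), mul_assoc, Units.mul_inv, mul_one]
end

section
/- Let a, b be n×n matrices over R with a² = b² = 1 and a ≠ b. Set V₀^a = ((1+a)/2)·R^n, V₁^a = ((1−a)/2)·R^n, and similarly V₀^b, V₁^b for b, and assume the submodules V₁^a and V₁^b are free of rank 1. Then ab = ba if and only if V₁^a ⊆ V₀^b and V₁^b ⊆ V₀^a. -/
theorem idem_aux {R : Type*} [CommRing R] [IsLocalRing R] {n : ℕ}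
    (p q : Matrix (Fin n) (Fin n) R) (hp : p * p = p) (hq : q * q = q) (hpq : p * q = q * p)
    (hfree : Module.Free R (LinearMap.range p.mulVecLin))
    (hrank : Module.rank R (LinearMap.range p.mulVecLin) = 1) :
    q * p = 0 ∨ q * p = p := by
  have hfin : Module.finrank R (LinearMap.range p.mulVecLin) = 1 :=
    Module.rank_eq_one_iff_finrank_eq_one.mp hrank
  let B := Module.basisUnique Unit hfin
  obtain ⟨v, hv⟩ : ∃ v, v = B () := ⟨_, rfl⟩
  have hgen : ∀ x : LinearMap.range p.mulVecLin, ∃ r : R, r • v = x := by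
    intro x
    refine ⟨B.repr x (), ?_⟩
    have := B.sum_repr x
    simpa [hv] using this
  have hfr : ∀ r : R, r • v = 0 → r = 0 := by
    intro r hr
    have := congrArg (fun x => B.repr x ()) hr
    simpa [hv] using this
  have hpv : p.mulVec (v : Fin n → R) = v := by
    obtain ⟨y, hy⟩ := v.2
    rw [← hy, Matrix.mulVecLin_apply, Matrix.mulVec_mulVec, hp]
  obtain ⟨c, hc⟩ := hgen ⟨p.mulVec (q.mulVec v), _, rfl⟩
  have hc : c • (v : Fin n → R) = q.mulVec v := by
    have h := congrArg Subtype.val hc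
    simp only [Submodule.coe_smul] at h
    rw [h, Matrix.mulVec_mulVec, hpq, ← Matrix.mulVec_mulVec, hpv]
  have hcc : c * (1 - c) = 0 := by
    apply hfr
    apply Subtype.ext
    have h2 : q.mulVec (q.mulVec (v : Fin n → R)) = q.mulVec v := by
      rw [Matrix.mulVec_mulVec, hq]
    rw [← hc, Matrix.mulVec_smul, ← hc, smul_smul] at h2
    simp only [Submodule.coe_smul, Submodule.coe_zero, mul_sub, mul_one, sub_smul, h2, sub_self]
  have hqp : q * p = c • p := by
    apply Matrix.ext_of_mulVec_single
    intro i
    obtain ⟨r, hr⟩ := hgen ⟨p.mulVec (Pi.single i 1), _, rfl⟩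
    have hr := congrArg Subtype.val hr
    simp only [Submodule.coe_smul] at hr
    rw [← Matrix.mulVec_mulVec, Matrix.smul_mulVec, ← hr, Matrix.mulVec_smul, ← hc, smul_comm]
  rcases IsLocalRing.isUnit_or_isUnit_one_sub_self c with h | h
  · right
    have : 1 - c = 0 := by rwa [h.mul_right_eq_zero] at hcc
    have : c = 1 := (sub_eq_zero.mp this).symm
    rw [hqp, this, one_smul]
  · left
    have : c = 0 := by rwa [h.mul_left_eq_zero] at hcc
    rw [hqp, this, zero_smul]

theorem range_le_aux {R : Type*} [CommRing R] {n : ℕ}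
    (p q q' : Matrix (Fin n) (Fin n) R) (hq : q * q = q) (hq' : q' = 1 - q) :
    LinearMap.range p.mulVecLin ≤ LinearMap.range q'.mulVecLin ↔ q * p = 0 := by
  subst hq'
  constructor
  · intro h
    apply Matrix.ext_of_mulVec_single
    intro i
    obtain ⟨y, hy⟩ := h ⟨Pi.single i 1, rfl⟩
    simp only [Matrix.mulVecLin_apply] at hy
    rw [← Matrix.mulVec_mulVec, ← hy, Matrix.mulVec_mulVec, mul_sub, hq, mul_one, sub_self,
      Matrix.zero_mulVec, Matrix.zero_mulVec]
  · rintro h _ ⟨x, rfl⟩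
    refine ⟨p.mulVec x, ?_⟩
    simp only [Matrix.mulVecLin_apply]
    rw [Matrix.mulVec_mulVec, sub_mul, h, one_mul, sub_zero]

theorem half_idem_aux {R : Type*} [CommRing R] [Invertible (2 : R)] {n : ℕ}
    (a : Matrix (Fin n) (Fin n) R) (ha : a * a = 1) :
    (⅟(2 : R) • (1 - a)) * (⅟(2 : R) • (1 - a)) = ⅟(2 : R) • (1 - a) := by
  have h : (1 - a) * (1 - a) = (2 : R) • (1 - a) := by
    rw [two_smul, sub_mul, mul_sub, mul_sub, ha]; simp only [one_mul, mul_one]; abel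
  rw [smul_mul_smul_comm, h, smul_smul, mul_assoc, invOf_mul_self, mul_one]

theorem half_compl_aux {R : Type*} [CommRing R] [Invertible (2 : R)] {n : ℕ}
    (a : Matrix (Fin n) (Fin n) R) :
    ⅟(2 : R) • (1 + a) = 1 - ⅟(2 : R) • (1 - a) := by
  rw [eq_sub_iff_add_eq, ← smul_add]
  have : 1 + a + (1 - a) = (2 : R) • (1 : Matrix (Fin n) (Fin n) R) := by
    rw [two_smul]; abel
  rw [this, smul_smul, invOf_mul_self, one_smul]

/-- Let `a, b` be `n × n` matrices over a commutative local ring `R`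
(with `2` invertible) with `a² = b² = 1` and `a ≠ b`.  Set `V₀ᵃ = ((1+a)/2)·R^n`,
`V₁ᵃ = ((1-a)/2)·R^n`, and similarly for `b`, and assume `V₁ᵃ` and `V₁ᵇ` are free of
rank `1`.  Then `ab = ba` if and only if `V₁ᵃ ⊆ V₀ᵇ` and `V₁ᵇ ⊆ V₀ᵃ`. -/
theorem stmt4 {R : Type*} [CommRing R] [IsLocalRing R] [Invertible (2 : R)]
    {n : ℕ} (a b : Matrix (Fin n) (Fin n) R) (ha : a * a = 1) (hb : b * b = 1)
    (hab : a ≠ b)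
    (V0a V1a V0b V1b : Submodule R (Fin n → R))
    (hV0a : V0a = LinearMap.range (⅟(2 : R) • ((1 : Matrix (Fin n) (Fin n) R) + a)).mulVecLin)
    (hV1a : V1a = LinearMap.range (⅟(2 : R) • ((1 : Matrix (Fin n) (Fin n) R) - a)).mulVecLin)
    (hV0b : V0b = LinearMap.range (⅟(2 : R) • ((1 : Matrix (Fin n) (Fin n) R) + b)).mulVecLin)
    (hV1b : V1b = LinearMap.range (⅟(2 : R) • ((1 : Matrix (Fin n) (Fin n) R) - b)).mulVecLin)
    (hV1afree : Module.Free R V1a) (hV1arank : Module.rank R V1a = 1)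
    (hV1bfree : Module.Free R V1b) (hV1brank : Module.rank R V1b = 1) :
    a * b = b * a ↔ (V1a ≤ V0b ∧ V1b ≤ V0a) := by
  subst hV0a hV1a hV0b hV1b
  have hp := half_idem_aux a ha
  have hq := half_idem_aux b hb
  rw [range_le_aux _ _ _ hq (half_compl_aux b), range_le_aux _ _ _ hp (half_compl_aux a)]
  have ea : a = 1 - (2 : R) • (⅟(2 : R) • (1 - a)) := by
    rw [smul_smul, mul_invOf_self, one_smul, sub_sub_cancel]
  have eb : b = 1 - (2 : R) • (⅟(2 : R) • (1 - b)) := by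
    rw [smul_smul, mul_invOf_self, one_smul, sub_sub_cancel]
  generalize hpd : ⅟(2 : R) • (1 - a) = p at *
  generalize hqd : ⅟(2 : R) • (1 - b) = q at *
  constructor
  · intro h
    have hpq : p * q = q * p := by
      rw [← hpd, ← hqd, smul_mul_smul_comm, smul_mul_smul_comm]
      congr 1
      rw [sub_mul, mul_sub, mul_sub, sub_mul, mul_sub, mul_sub, h]
      simp only [one_mul, mul_one]; abel
    rcases idem_aux p q hp hq hpq hV1afree hV1arank with h1 | h1
    · exact ⟨h1, hpq.trans h1⟩
    rcases idem_aux q p hq hp hpq.symm hV1bfree hV1brank with h2 | h2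
    · exact ⟨hpq.symm.trans h2, h2⟩
    · exact absurd (by rw [ea, eb, ← h1, ← hpq, h2]) hab
  · rintro ⟨h1, h2⟩
    rw [ea, eb]
    simp only [sub_mul, mul_sub, one_mul, mul_one, smul_mul_smul_comm, h1, h2]
    abel
end

section
/- Let l ≥ 2 and let a be an l×l matrix over R with a² = 1 such that the submodule V₁ = ((1−a)/2)·R^l is free of rank 1. Then there exists g ∈ GL_l(R) such that g·a·g⁻¹ = M, where M is the l×l matrix equal to the identity matrix except that M₁₁ = −1 and M₁₂ = 1. -/
open Matrix

theorem aux_ker_free {R M : Type*} [CommRing R] [IsLocalRing R] [AddCommGroup M] [Module R M]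
    [Module.Free R M] [Module.Finite R M] (f : M →ₗ[R] R) (v : M) (hv : f v = 1) :
    Module.Free R (LinearMap.ker f) ∧ Module.Finite R (LinearMap.ker f) ∧
      Module.finrank R (LinearMap.ker f) + 1 = Module.finrank R M := by
  let p : M →ₗ[R] LinearMap.ker f :=
    LinearMap.codRestrict _ (LinearMap.id - f.smulRight v) (by
      intro x
      simp [LinearMap.mem_ker, hv])
  have hpc : ∀ x, (p x : M) = x - f x • v := fun _ => rfl
  have hpv : p v = 0 := Subtype.ext (by simp [hpc, hv])
  have hpk : ∀ x : LinearMap.ker f, p x = x := by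
    intro x
    have hx : f x = 0 := x.2
    exact Subtype.ext (by simp [hpc, hx])
  have hp : p ∘ₗ (LinearMap.ker f).subtype = LinearMap.id := by
    ext x
    simp [hpk]
  have hfin : Module.Finite R (LinearMap.ker f) :=
    Module.Finite.of_surjective p (fun x => ⟨x, LinearMap.congr_fun hp x⟩)
  have hproj : Module.Projective R (LinearMap.ker f) :=
    Module.Projective.of_split _ p hp
  have hfree : Module.Free R (LinearMap.ker f) := Module.free_of_flat_of_isLocalRing
  refine ⟨hfree, hfin, ?_⟩
  let e : M ≃ₗ[R] (LinearMap.ker f × R) :=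
    LinearEquiv.ofLinearMap (p.prod f)
      ((LinearMap.ker f).subtype.coprod (LinearMap.toSpanSingleton R M v))
      (by
        ext x
        · have hx : f x = 0 := x.2
          simp [hpk]
        · simp
        · simp [hpv]
        · simp [hv])
      (by
        ext x
        simp [hpc])
  rw [e.finrank_eq, Module.finrank_prod, Module.finrank_self]

theorem aux_equiv {R M : Type*} [CommRing R] [IsLocalRing R] [AddCommGroup M] [Module R M]
    [Module.Free R M] [Module.Finite R M] (f f' : M →ₗ[R] R) (v v' : M) (hv : f v = 1)
    (hv' : f' v' = 1) : ∃ g : M ≃ₗ[R] M, g v = v' ∧ ∀ x, f' (g x) = f x := by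
  obtain ⟨h1, h2, h3⟩ := aux_ker_free f v hv
  obtain ⟨h1', h2', h3'⟩ := aux_ker_free f' v' hv'
  let s : LinearMap.ker f ≃ₗ[R] LinearMap.ker f' :=
    LinearEquiv.ofFinrankEq _ _ (by omega)
  let p : M →ₗ[R] LinearMap.ker f :=
    LinearMap.codRestrict _ (LinearMap.id - f.smulRight v) (by
      intro x
      simp [LinearMap.mem_ker, hv])
  let p' : M →ₗ[R] LinearMap.ker f' :=
    LinearMap.codRestrict _ (LinearMap.id - f'.smulRight v') (by
      intro x
      simp [LinearMap.mem_ker, hv'])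
  have hpc : ∀ x, (p x : M) = x - f x • v := fun _ => rfl
  have hpc' : ∀ x, (p' x : M) = x - f' x • v' := fun _ => rfl
  have hpv : p v = 0 := Subtype.ext (by simp [hpc, hv])
  have hpv' : p' v' = 0 := Subtype.ext (by simp [hpc', hv'])
  have hpk : ∀ x : LinearMap.ker f, p x = x := by
    intro x
    have hx : f x = 0 := x.2
    exact Subtype.ext (by simp [hpc, hx])
  have hpk' : ∀ x : LinearMap.ker f', p' x = x := by
    intro x
    have hx : f' x = 0 := x.2
    exact Subtype.ext (by simp [hpc', hx])
  have hk : ∀ x : LinearMap.ker f, f x = 0 := fun x => x.2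
  have hk' : ∀ x : LinearMap.ker f', f' x = 0 := fun x => x.2
  have hd : ∀ x, (p x : M) + f x • v = x := by intro x; simp [hpc]
  have hd' : ∀ x, (p' x : M) + f' x • v' = x := by intro x; simp [hpc']
  let G : M →ₗ[R] M := (LinearMap.ker f').subtype ∘ₗ s.toLinearMap ∘ₗ p + f.smulRight v'
  let H : M →ₗ[R] M := (LinearMap.ker f).subtype ∘ₗ s.symm.toLinearMap ∘ₗ p' + f'.smulRight v
  have hG : ∀ x, G x = (s (p x) : M) + f x • v' := fun x => rfl
  have hH : ∀ x, H x = (s.symm (p' x) : M) + f' x • v := fun x => rfl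
  refine ⟨LinearEquiv.ofLinearMap G H ?_ ?_, ?_, ?_⟩
  · refine LinearMap.ext fun x => ?_
    simp only [LinearMap.comp_apply, LinearMap.id_apply]
    rw [hG, hH]
    simp only [map_add, map_smul, hpv, hpk, hk, hv, smul_zero, add_zero, zero_add,
      LinearEquiv.apply_symm_apply, smul_eq_mul, mul_one]
    exact hd' x
  · refine LinearMap.ext fun x => ?_
    simp only [LinearMap.comp_apply, LinearMap.id_apply]
    rw [hH, hG]
    simp only [map_add, map_smul, hpv', hpk', hk', hv', smul_zero, add_zero, zero_add,
      LinearEquiv.symm_apply_apply, smul_eq_mul, mul_one]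
    exact hd x
  · simp [hG, hpv, hv]
  · intro x
    simp [hG, hk', hv']


/-- Let `l ≥ 2` and let `a` be an `l × l` matrix over a commutative
local ring `R` (with `2` invertible) with `a² = 1` such that `V₁ = ((1-a)/2)·R^l` is
free of rank `1`.  Then there is `g ∈ GL_l(R)` with `g·a·g⁻¹ = M`, where `M` equals the
identity matrix except `M₁₁ = -1` and `M₁₂ = 1`. -/
theorem stmt5 {R : Type*} [CommRing R] [IsLocalRing R] [Invertible (2 : R)]
    {l : ℕ} (hl : 2 ≤ l)
    (a : Matrix (Fin l) (Fin l) R) (ha : a * a = 1)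
    (V1 : Submodule R (Fin l → R))
    (hV1 : V1 = LinearMap.range (⅟(2 : R) • ((1 : Matrix (Fin l) (Fin l) R) - a)).mulVecLin)
    (hfree : Module.Free R V1) (hrank : Module.rank R V1 = 1) :
    ∃ g : GL (Fin l) R,
      (g : Matrix (Fin l) (Fin l) R) * a * ((g⁻¹ : GL (Fin l) R) : Matrix (Fin l) (Fin l) R) =
        Matrix.of (fun i j : Fin l =>
          if i = (⟨0, by omega⟩ : Fin l) then
            (if j = (⟨0, by omega⟩ : Fin l) then (-1 : R)
             else if j = (⟨1, by omega⟩ : Fin l) then 1 else 0)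
          else if i = j then 1 else 0) := by
  subst hV1
  set E : Matrix (Fin l) (Fin l) R := ⅟(2 : R) • (1 - a) with hE
  have h2 : (2 : R) * ⅟(2 : R) = 1 := mul_invOf_self 2
  have hEa : a = 1 - (2 : R) • E := by
    rw [hE, smul_smul, h2, one_smul]; abel
  have hEE : E * E = E := by
    have h : (1 - a) * (1 - a) = (2 : R) • (1 - a) := by
      rw [two_smul, sub_mul, mul_sub, mul_sub, ha]; simp; abel
    rw [hE, smul_mul_assoc, mul_smul_comm, h, smul_smul (⅟(2 : R)) 2, invOf_mul_self, one_smul]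
  have hfin : Module.Finite R (LinearMap.range E.mulVecLin) := inferInstance
  have hfr : Module.finrank R (LinearMap.range E.mulVecLin) = Module.finrank R R := by
    rw [Module.finrank_self, Module.finrank, hrank]; simp
  let t : LinearMap.range E.mulVecLin ≃ₗ[R] R := LinearEquiv.ofFinrankEq _ _ hfr
  let f : (Fin l → R) →ₗ[R] R := t.toLinearMap ∘ₗ E.mulVecLin.rangeRestrict
  let v : Fin l → R := (t.symm 1 : LinearMap.range E.mulVecLin)
  have hfv : ∀ x, E *ᵥ x = f x • v := by
    intro x
    have h : E.mulVecLin.rangeRestrict x = f x • t.symm 1 := by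
      rw [← map_smul, smul_eq_mul, mul_one]; simp [f]
    exact congrArg Subtype.val h
  have hv : f v = 1 := by
    have h : E.mulVecLin.rangeRestrict v = t.symm 1 := by
      apply Subtype.ext
      obtain ⟨y, hy⟩ := (t.symm 1).2
      change E *ᵥ v = v
      have hy' : E *ᵥ y = v := hy
      rw [← hy', mulVec_mulVec, hEE]
    simp [f, h]
  let i0 : Fin l := ⟨0, by omega⟩
  let i1 : Fin l := ⟨1, by omega⟩
  have h01 : i0 ≠ i1 := by simp [i0, i1]
  let f' : (Fin l → R) →ₗ[R] R := LinearMap.proj i0 - ⅟(2 : R) • LinearMap.proj i1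
  have hv' : f' (Pi.single i0 1) = 1 := by simp [f', h01.symm]
  obtain ⟨g, hg, hgf⟩ := aux_equiv f f' v (Pi.single i0 1) hv hv'
  set N : Matrix (Fin l) (Fin l) R := Matrix.of (fun i j : Fin l =>
          if i = (⟨0, by omega⟩ : Fin l) then
            (if j = (⟨0, by omega⟩ : Fin l) then (-1 : R)
             else if j = (⟨1, by omega⟩ : Fin l) then 1 else 0)
          else if i = j then 1 else 0) with hN
  have hNx : ∀ x, N *ᵥ x = x - ((2 : R) * f' x) • Pi.single i0 1 := by
    intro x
    ext i
    by_cases hi : i = i0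
    · subst hi
      have h : ∀ j, N i0 j = (if j = i0 then -1 else 0) + (if j = i1 then 1 else 0) := by
        intro j
        by_cases hj : j = i0
        · subst hj; simp [hN, i0, i1]
        · have hj' : ¬ j = ⟨0, by omega⟩ := hj
          simp [hN, i0, i1, hj']
      simp only [mulVec, dotProduct, h, add_mul, Finset.sum_add_distrib, ite_mul, zero_mul,
        Finset.sum_ite_eq', Finset.mem_univ, if_true]
      simp [f']
      linear_combination (-x i1) * h2
    · have hi' : ¬ i = ⟨0, by omega⟩ := hi
      simp [mulVec, dotProduct, hN, hi', Pi.single_apply, hi]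
  have hax : ∀ x, a *ᵥ x = x - ((2 : R) * f x) • v := by
    intro x
    rw [hEa, sub_mulVec, one_mulVec, smul_mulVec, hfv, smul_smul]
  have hGx : ∀ x, LinearMap.toMatrix' g.toLinearMap *ᵥ x = g x := by
    intro x; rw [LinearMap.toMatrix'_mulVec]; rfl
  have hHx : ∀ x, LinearMap.toMatrix' g.symm.toLinearMap *ᵥ x = g.symm x := by
    intro x; rw [LinearMap.toMatrix'_mulVec]; rfl
  let G : GL (Fin l) R := ⟨LinearMap.toMatrix' g.toLinearMap, LinearMap.toMatrix' g.symm.toLinearMap,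
    by rw [← LinearMap.toMatrix'_comp]; simp, by rw [← LinearMap.toMatrix'_comp]; simp⟩
  refine ⟨G, ?_⟩
  change LinearMap.toMatrix' g.toLinearMap * a * LinearMap.toMatrix' g.symm.toLinearMap = N
  apply Matrix.ext_of_mulVec_single
  intro j
  generalize (Pi.single j 1 : Fin l → R) = x
  rw [← mulVec_mulVec, ← mulVec_mulVec, hHx, hax, hGx, hNx, map_sub, map_smul, hg, ← hgf,
    LinearEquiv.apply_symm_apply]
end

section
/- Let w₁ = [[−1, 1], [0, 1]] and w₂ = [[1, 0], [1, −1]] as 2×2 matrices over R. Suppose x, y are 2×2 matrices over R with x ≡ w₁ (mod J), y ≡ w₂ (mod J), x² = y² = 1, and (xy)² = yx. Then there exists g ∈ GL₂(R) such that g·x·g⁻¹ = w₁ and g·y·g⁻¹ = w₂. -/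
open Matrix

/-- Over a commutative local ring `R` with `2` invertible (maximal
ideal `J`), let `w₁ = [[-1,1],[0,1]]` and `w₂ = [[1,0],[1,-1]]`.  If `x ≡ w₁ (mod J)`,
`y ≡ w₂ (mod J)`, `x² = y² = 1` and `(xy)² = yx`, then some `g ∈ GL₂(R)` satisfies
`g·x·g⁻¹ = w₁` and `g·y·g⁻¹ = w₂`. -/
theorem stmt6 {R : Type*} [CommRing R] [IsLocalRing R] [Invertible (2 : R)]
    (x y : Matrix (Fin 2) (Fin 2) R)
    (hx : ∀ i j, (x - !![(-1 : R), 1; 0, 1]) i j ∈ IsLocalRing.maximalIdeal R)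
    (hy : ∀ i j, (y - !![(1 : R), 0; 1, -1]) i j ∈ IsLocalRing.maximalIdeal R)
    (hx2 : x * x = 1) (hy2 : y * y = 1)
    (hxy : (x * y) * (x * y) = y * x) :
    ∃ g : GL (Fin 2) R,
      (g : Matrix (Fin 2) (Fin 2) R) * x * ((g⁻¹ : GL (Fin 2) R) : Matrix (Fin 2) (Fin 2) R)
        = !![(-1 : R), 1; 0, 1] ∧
      (g : Matrix (Fin 2) (Fin 2) R) * y * ((g⁻¹ : GL (Fin 2) R) : Matrix (Fin 2) (Fin 2) R)
        = !![(1 : R), 0; 1, -1] := by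
  obtain ⟨a, b, c, d, rfl⟩ : ∃ a b c d, x = !![a, b; c, d] := ⟨_, _, _, _, Matrix.eta_fin_two x⟩
  obtain ⟨e, f, h, k, rfl⟩ : ∃ a b c d, y = !![a, b; c, d] := ⟨_, _, _, _, Matrix.eta_fin_two y⟩
  have unit_of : ∀ u : R, IsLocalRing.residue R u ≠ 0 → IsUnit u := fun u hu =>
    (IsLocalRing.residue_ne_zero_iff_isUnit u).1 hu
  have x00 := (IsLocalRing.residue_eq_zero_iff _).2 (hx 0 0)
  have x01 := (IsLocalRing.residue_eq_zero_iff _).2 (hx 0 1)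
  have x10 := (IsLocalRing.residue_eq_zero_iff _).2 (hx 1 0)
  have x11 := (IsLocalRing.residue_eq_zero_iff _).2 (hx 1 1)
  have y00 := (IsLocalRing.residue_eq_zero_iff _).2 (hy 0 0)
  have y01 := (IsLocalRing.residue_eq_zero_iff _).2 (hy 0 1)
  have y10 := (IsLocalRing.residue_eq_zero_iff _).2 (hy 1 0)
  have y11 := (IsLocalRing.residue_eq_zero_iff _).2 (hy 1 1)
  simp [sub_eq_zero] at x01 x10 x11 y00 y01 y10
  simp at x00 y11
  have x00' := eq_neg_of_add_eq_zero_left x00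
  have y11' := eq_neg_of_add_eq_zero_left y11
  have ub : IsUnit b := unit_of b (by simp [x01])
  have uh : IsUnit h := unit_of h (by simp [y10])
  have X00 := congrFun (congrFun hx2 0) 0
  have X01 := congrFun (congrFun hx2 0) 1
  have Y00 := congrFun (congrFun hy2 0) 0
  have Y10 := congrFun (congrFun hy2 1) 0
  have Z01 := congrFun (congrFun hxy 0) 1
  simp [Matrix.mul_apply, Fin.sum_univ_two] at X00 X01 Y00 Y10 Z01
  have hd : d = -a := by
    have : b * (a + d) = 0 := by linear_combination X01
    have := (ub.mul_right_eq_zero).1 this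
    linear_combination this
  have hk : k = -e := by
    have : h * (e + k) = 0 := by linear_combination Y10
    have := (uh.mul_right_eq_zero).1 this
    linear_combination this
  subst hd hk
  have y01' : IsLocalRing.residue R f = 0 :=
    (IsLocalRing.residue_eq_zero_iff _).2 (by simpa using y01)
  have uq : IsUnit (a * f - b * e) := unit_of _ (by simp [x00', x01, y00, y01'])
  have ht : a * e + b * h + c * f + a * e + 1 = 0 := by
    have : (a * f - b * e) * (a * e + b * h + c * f + a * e + 1) = 0 := by
      linear_combination Z01
    exact (uq.mul_right_eq_zero).1 this
  let P : Matrix (Fin 2) (Fin 2) R :=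
    !![b, e * b - f * (1 + a) - b; -1 - a, h * b + e * (1 + a) + 1 + a]
  have uP : IsUnit P.det := unit_of _ (by
    simp [P, Matrix.det_fin_two, x00', x01, y00, y01, y10])
  have h1 : !![a, b; c, -a] * P = P * !![(-1 : R), 1; 0, 1] := by
    ext i j
    fin_cases i <;> fin_cases j <;> simp [P, Matrix.mul_apply, Fin.sum_univ_two]
    · ring
    · linear_combination b * ht - f * X00
    · linear_combination X00
    · linear_combination (-1 - a) * ht + (e - 1) * X00
  have h2 : !![e, f; h, -e] * P = P * !![(1 : R), 0; 1, -1] := by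
    ext i j
    fin_cases i <;> fin_cases j <;> simp [P, Matrix.mul_apply, Fin.sum_univ_two]
    · ring
    · linear_combination b * Y00
    · ring
    · linear_combination (-1 - a) * Y00
  let G : GL (Fin 2) R := Matrix.GeneralLinearGroup.mk'' P uP
  have hG : (G : Matrix (Fin 2) (Fin 2) R) = P := rfl
  have hinv : ((G⁻¹ : GL (Fin 2) R) : Matrix (Fin 2) (Fin 2) R) * P = 1 := by
    rw [← hG]; exact Units.inv_mul G
  refine ⟨G⁻¹, ?_, ?_⟩
  · rw [inv_inv, hG, Matrix.mul_assoc, h1, ← Matrix.mul_assoc, hinv, Matrix.one_mul]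
  · rw [inv_inv, hG, Matrix.mul_assoc, h2, ← Matrix.mul_assoc, hinv, Matrix.one_mul]
end

section
/- Let w₁ and w₂ be the 3×3 matrices over R with rows (−1,1,0), (0,1,0), (0,0,1) and (1,0,0), (1,−1,1), (0,0,1), respectively. Suppose y is a 3×3 matrix over R with y ≡ w₂ (mod J), y² = 1, and (w₁y)² = y·w₁. Then there exists g ∈ GL₃(R) such that g·w₁·g⁻¹ = w₁ and g·y·g⁻¹ = w₂. -/
open Matrix

theorem aux_zero {R : Type*} [CommRing R] [IsLocalRing R] [Invertible (2 : R)]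
    (b : Matrix (Fin 3) (Fin 3) R) (hb : ∀ i j, b i j ∈ IsLocalRing.maximalIdeal R)
    (h : b * b = (2 : R) • b) : b = 0 := by
  have h2 : IsUnit ((2 : R) • (1 : Matrix (Fin 3) (Fin 3) R) - b) := by
    rw [Matrix.isUnit_iff_isUnit_det]
    apply isUnit_of_map_unit (IsLocalRing.residue R)
    rw [RingHom.map_det]
    have e : (IsLocalRing.residue R).mapMatrix ((2 : R) • (1 : Matrix (Fin 3) (Fin 3) R) - b)
        = (IsLocalRing.residue R).mapMatrix ((2 : R) • (1 : Matrix (Fin 3) (Fin 3) R)) := by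
      ext i j
      have := (IsLocalRing.residue_eq_zero_iff (b i j)).2 (hb i j)
      simp only [RingHom.mapMatrix_apply, Matrix.map_apply, Matrix.sub_apply, map_sub, this, sub_zero]
    rw [e, ← RingHom.map_det, Matrix.det_smul, Matrix.det_one, mul_one]
    exact ((isUnit_of_invertible (2 : R)).pow _).map _
  apply h2.mul_left_cancel
  rw [sub_mul, h]
  simp

theorem aux_minor {R : Type*} [CommRing R] [IsLocalRing R] [Invertible (2 : R)]
    (a : Matrix (Fin 3) (Fin 3) R) (c : R) (hc : c * a 1 1 = 1)
    (h0 : ∀ j, a 0 j ∈ IsLocalRing.maximalIdeal R)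
    (h2 : ∀ j, a 2 j ∈ IsLocalRing.maximalIdeal R)
    (h : a * a = (2 : R) • a) (i j : Fin 3) : a i j = c * a i 1 * a 1 j := by
  have key := aux_zero (Matrix.of fun i j => a i j - c * a i 1 * a 1 j) ?_ ?_
  · have := congrFun (congrFun key i) j
    simpa [sub_eq_zero] using this
  · intro i j
    simp only [Matrix.of_apply]
    fin_cases i
    · exact Ideal.sub_mem _ (h0 j) (Ideal.mul_mem_right _ _ (Ideal.mul_mem_left _ _ (h0 1)))
    · have : a 1 j - c * a 1 1 * a 1 j = 0 := by rw [hc]; ring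
      simp [this]
    · exact Ideal.sub_mem _ (h2 j) (Ideal.mul_mem_right _ _ (Ideal.mul_mem_left _ _ (h2 1)))
  · have H : ∀ i j, a i 0 * a 0 j + a i 1 * a 1 j + a i 2 * a 2 j = 2 * a i j := by
      intro i j
      have := congrFun (congrFun h i) j
      simpa [Matrix.mul_apply, Fin.sum_univ_three] using this
    ext i j
    simp only [Matrix.mul_apply, Fin.sum_univ_three, Matrix.of_apply, Matrix.smul_apply, smul_eq_mul]
    linear_combination H i j - c * a 1 j * H i 1 - c * a i 1 * H 1 j
      + c ^ 2 * a i 1 * a 1 j * H 1 1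
      + (2 * c * a i 1 * a 1 j) * hc

/-- Over a commutative local ring `R` with `2` invertible (maximal
ideal `J`), let `w₁, w₂` be the `3 × 3` matrices with rows `(-1,1,0),(0,1,0),(0,0,1)`
and `(1,0,0),(1,-1,1),(0,0,1)`.  If `y ≡ w₂ (mod J)`, `y² = 1` and `(w₁y)² = y·w₁`,
then some `g ∈ GL₃(R)` satisfies `g·w₁·g⁻¹ = w₁` and `g·y·g⁻¹ = w₂`. -/
theorem stmt7 {R : Type*} [CommRing R] [IsLocalRing R] [Invertible (2 : R)]
    (y : Matrix (Fin 3) (Fin 3) R)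
    (hy : ∀ i j, (y - !![(1 : R), 0, 0; 1, -1, 1; 0, 0, 1]) i j ∈ IsLocalRing.maximalIdeal R)
    (hy2 : y * y = 1)
    (hw1y : (!![(-1 : R), 1, 0; 0, 1, 0; 0, 0, 1] * y) * (!![(-1 : R), 1, 0; 0, 1, 0; 0, 0, 1] * y)
      = y * !![(-1 : R), 1, 0; 0, 1, 0; 0, 0, 1]) :
    ∃ g : GL (Fin 3) R,
      (g : Matrix (Fin 3) (Fin 3) R) * !![(-1 : R), 1, 0; 0, 1, 0; 0, 0, 1] *
          ((g⁻¹ : GL (Fin 3) R) : Matrix (Fin 3) (Fin 3) R)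
        = !![(-1 : R), 1, 0; 0, 1, 0; 0, 0, 1] ∧
      (g : Matrix (Fin 3) (Fin 3) R) * y * ((g⁻¹ : GL (Fin 3) R) : Matrix (Fin 3) (Fin 3) R)
        = !![(1 : R), 0, 0; 1, -1, 1; 0, 0, 1] := by
  obtain ⟨a, rfl⟩ : ∃ a, y = 1 - a := ⟨1 - y, by simp⟩
  have ha : a * a = (2 : R) • a := by
    have e : (1 - a) * (1 - a) = 1 - (2 : R) • a + a * a := by
      rw [two_smul]; noncomm_ring
    rw [e] at hy2
    have e2 : a * a = (1 - (2 : R) • a + a * a) - 1 + (2 : R) • a := by abel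
    rw [e2, hy2]; simp
  have m0 : ∀ j, a 0 j ∈ IsLocalRing.maximalIdeal R := by
    intro j
    have := hy 0 j
    fin_cases j <;> simpa using this
  have m2 : ∀ j, a 2 j ∈ IsLocalRing.maximalIdeal R := by
    intro j
    have := hy 2 j
    fin_cases j <;> simpa using this
  have hy11 := hy 1 1
  have hy12 := hy 1 2
  have u2 : IsUnit (2 : R) := isUnit_of_invertible 2
  have unit_of : ∀ x z : R, IsUnit z → z - x ∈ IsLocalRing.maximalIdeal R → IsUnit x := by
    intro x z hz hx
    by_contra hn
    have h1 : x ∈ IsLocalRing.maximalIdeal R := hn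
    have h3 := Ideal.add_mem _ hx h1
    rw [sub_add_cancel] at h3
    exact h3 hz
  have ut : IsUnit (a 1 1) := by
    refine unit_of _ 2 u2 ?_
    convert hy11 using 1
    simp; ring
  have uq : IsUnit (a 1 2) := by
    refine unit_of _ (-1) isUnit_one.neg ?_
    convert hy12 using 1
    simp; ring
  obtain ⟨c, hc⟩ := ut.exists_left_inv
  have ual : IsUnit (2 * a 0 1 - a 1 1) := by
    refine unit_of _ (- a 1 1) ut.neg ?_
    have : -a 1 1 - (2 * a 0 1 - a 1 1) = (-2) * a 0 1 := by ring
    rw [this]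
    exact Ideal.mul_mem_left _ _ (m0 1)
  have hm := aux_minor a c hc m0 m2 ha
  have htr : c * (a 0 1 * a 1 0 + a 1 1 * a 1 1 + a 2 1 * a 1 2) = 2 := by
    have := congrFun (congrFun ha 1) 1
    simp [Matrix.mul_apply, Fin.sum_univ_three] at this
    linear_combination c * this + 2 * hc
  have e00 := hm 0 0
  have e02 := hm 0 2
  have e20 := hm 2 0
  have e22 := hm 2 2
  clear hm
  have hbraid : !![(-1 : R), 1, 0; 0, 1, 0; 0, 0, 1] * (1 - a) * !![(-1 : R), 1, 0; 0, 1, 0; 0, 0, 1]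
      = (1 - a) * !![(-1 : R), 1, 0; 0, 1, 0; 0, 0, 1] * (1 - a) := by
    rw [← hw1y]
    simp only [mul_assoc, hy2, mul_one]
  have hab : c * a 1 0 * (2 * a 0 1 - a 1 1) = 1 := by
    have h11 := congrFun (congrFun hbraid 1) 1
    simp [Matrix.mul_apply, Matrix.vecMul, dotProduct, Fin.sum_univ_three, Matrix.one_apply] at h11
    grind
  set G : Matrix (Fin 3) (Fin 3) R := !![1, - a 0 1 * c, 0; 0, 1 - 2 * a 0 1 * c, 0;
    0, -3 * a 0 1 * c + 2 + (2 * a 0 1 - a 1 1), a 1 2 * c * (2 * a 0 1 - a 1 1)] with hG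
  have hdet : IsUnit G.det := by
    have : G.det = - (c ^ 2 * a 1 2 * (2 * a 0 1 - a 1 1) ^ 2) := by
      rw [hG, Matrix.det_fin_three]
      simp
      linear_combination (-(a 1 2 * c * (2 * a 0 1 - a 1 1))) * hc
    rw [this]
    exact ((((IsUnit.of_mul_eq_one _ hc).pow 2).mul uq).mul (ual.pow 2)).neg
  have c1 : G * !![(-1 : R), 1, 0; 0, 1, 0; 0, 0, 1] = !![(-1 : R), 1, 0; 0, 1, 0; 0, 0, 1] * G := by
    ext i j
    fin_cases i <;> fin_cases j <;>
      simp [hG, Matrix.mul_apply, Fin.sum_univ_three] <;> ring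
  have c2 : G * (1 - a) = !![(1 : R), 0, 0; 1, -1, 1; 0, 0, 1] * G := by
    ext i j
    fin_cases i <;> fin_cases j <;>
      simp [hG, Matrix.mul_apply, Fin.sum_univ_three, Matrix.one_apply] <;> grind
  have hu : IsUnit G := (Matrix.isUnit_iff_isUnit_det _).2 hdet
  refine ⟨hu.unit, ?_, ?_⟩
  · have : (hu.unit : Matrix (Fin 3) (Fin 3) R) = G := hu.unit_spec
    rw [Units.mul_inv_eq_iff_eq_mul, this, c1]
  · have : (hu.unit : Matrix (Fin 3) (Fin 3) R) = G := hu.unit_spec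
    rw [Units.mul_inv_eq_iff_eq_mul, this, c2]
end

section
/- Let w₁, w₂, w₃, w₄ be the 4×4 matrices over R that equal the identity matrix except for one row: row 1 of w₁ is (−1,1,0,0); row 2 of w₂ is (1,−1,1,1); row 3 of w₃ is (0,1,−1,0); row 4 of w₄ is (0,1,0,−1). Suppose y₁, y₂, y₃, y₄ are 4×4 matrices over R with yᵢ ≡ wᵢ (mod J) and yᵢ² = 1 for each i, such that y₁, y₃, y₄ pairwise commute and (y₁y₂)² = y₂y₁, (y₃y₂)² = y₂y₃, (y₄y₂)² = y₂y₄. Then there exists g ∈ GL₄(R) such that g·yᵢ·g⁻¹ = wᵢ for i = 1, 2, 3, 4. -/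
open Matrix

theorem unit_lift {R : Type*} [CommRing R] [IsLocalRing R] (M N : Matrix (Fin 4) (Fin 4) R)
    (h : (IsLocalRing.residue R).mapMatrix M = (IsLocalRing.residue R).mapMatrix N)
    (hN : IsUnit N) : IsUnit M := by
  rw [Matrix.isUnit_iff_isUnit_det] at hN ⊢
  apply (isUnit_map_iff (IsLocalRing.residue R) _).1
  rw [RingHom.map_det, h, ← RingHom.map_det]
  exact hN.map _

theorem rank_one {R : Type*} [CommRing R] [IsLocalRing R] [Invertible (2 : R)]
    (w y : Matrix (Fin 4) (Fin 4) R) (i : Fin 4)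
    (h : (IsLocalRing.residue R).mapMatrix y = (IsLocalRing.residue R).mapMatrix w)
    (hsq : y * y = 1)
    (h1 : (1 - w) * Matrix.single i i 1 = (2 : R) • Matrix.single i i 1)
    (h2 : Matrix.single i i 1 * (1 - w) = 1 - w) :
    ∃ a b : Fin 4 → R, y = 1 - Matrix.vecMulVec a b ∧ b ⬝ᵥ a = 2 ∧
      ∀ j, IsLocalRing.residue R (a j) = IsLocalRing.residue R ((1 : Matrix (Fin 4) (Fin 4) R) j i) := by
  set E : Matrix (Fin 4) (Fin 4) R := Matrix.single i i 1 with hE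
  have hEE : E * E = E := by simp [hE]
  obtain ⟨q, hq⟩ : ∃ q, q = (⅟2 : R) • (1 - y) := ⟨_, rfl⟩
  obtain ⟨q0, hq0⟩ : ∃ q0, q0 = (⅟2 : R) • (1 - w) := ⟨_, rfl⟩
  have hy : y = 1 - (2 : R) • q := by rw [hq, smul_smul]; simp
  have hqq : q * q = q := by
    have : (1 - y) * (1 - y) = (2 : R) • (1 - y) := by
      rw [two_smul, sub_mul, mul_sub, mul_sub, hsq, one_mul, one_mul, mul_one]; abel
    rw [hq, smul_mul_smul_comm, this, smul_smul, mul_assoc]; simp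
  have hq0E : q0 * E = E := by
    rw [hq0, smul_mul_assoc, h1, smul_smul]; simp
  have hEq0 : E * q0 = q0 := by
    rw [hq0, mul_smul_comm, h2]
  have hs : ∀ M : Matrix (Fin 4) (Fin 4) R, (IsLocalRing.residue R).mapMatrix ((⅟2 : R) • M)
      = (IsLocalRing.residue R (⅟2)) • (IsLocalRing.residue R).mapMatrix M := by
    intro M; ext a b; simp
  have hqm : (IsLocalRing.residue R).mapMatrix q = (IsLocalRing.residue R).mapMatrix q0 := by
    rw [hq, hq0, hs, hs, map_sub, map_sub, h]
  have hB : IsUnit (1 - E - q + q * E + q * E) := by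
    apply unit_lift _ (1 - E - q0 + q0 * E + q0 * E)
    · simp only [map_add, map_sub, map_mul, hqm]
    · have hz : (q0 - E) * (q0 - E) = 0 := by
        have h0 : q0 * q0 = q0 := by
          calc q0 * q0 = (q0 * E) * q0 := by rw [mul_assoc, hEq0]
            _ = q0 := by rw [hq0E, hEq0]
        rw [mul_sub, sub_mul, sub_mul, h0, hEq0, hq0E, hEE]; simp
      have e : 1 - E - q0 + q0 * E + q0 * E = 1 - (q0 - E) := by
        rw [hq0E]; abel
      rw [e]
      apply IsUnit.of_mul_eq_one (1 + (q0 - E))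
      have : (1 - (q0 - E)) * (1 + (q0 - E)) = 1 - (q0 - E) * (q0 - E) := by noncomm_ring
      rw [this, hz, sub_zero]
  obtain ⟨u, hu⟩ := hB
  have hqB : q * (u : Matrix (Fin 4) (Fin 4) R) = q * E := by
    rw [hu]
    simp only [mul_add, mul_sub, ← mul_assoc, hqq, mul_one]; abel
  have hqv : q = q * E * (↑u⁻¹ : Matrix (Fin 4) (Fin 4) R) := by
    rw [← hqB, mul_assoc]; simp
  set B' : Matrix (Fin 4) (Fin 4) R := ↑u⁻¹ with hB'
  let a : Fin 4 → R := fun j => q j i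
  let r : Fin 4 → R := fun j => B' i j
  have hqa : q = Matrix.vecMulVec a r := by
    conv_lhs => rw [hqv]
    ext s t
    rw [Matrix.mul_apply, Finset.sum_eq_single i]
    · simp [hE, Matrix.vecMulVec_apply, a, r]
    · intro b _ hb
      simp [hE, Matrix.mul_single_apply_of_ne, hb]
    · simp
  have hres : ∀ j, IsLocalRing.residue R (a j)
      = IsLocalRing.residue R ((1 : Matrix (Fin 4) (Fin 4) R) j i) := by
    intro j
    have e1 := congrFun (congrFun hqm j) i
    have e2 := congrFun (congrFun hq0E j) i
    simp [hE] at e1 e2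
    simp only [a]
    rw [e1, e2, Matrix.single_apply, Matrix.one_apply]
    simp [eq_comm]
  have hai : IsUnit (a i) := by
    apply (isUnit_map_iff (IsLocalRing.residue R) _).1
    rw [hres]; simp
  have hra : r ⬝ᵥ a = 1 := by
    have e : q *ᵥ a = a := by
      ext j
      have := congrFun (congrFun hqq j) i
      simpa [Matrix.mul_apply, Matrix.mulVec, dotProduct, a] using this
    have e' := congrFun e i
    rw [hqa, Matrix.vecMulVec_mulVec] at e'
    simp at e'
    apply hai.mul_left_cancel
    rw [mul_one]; exact e'
  refine ⟨a, (2 : R) • r, ?_, ?_, hres⟩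
  · rw [hy, Matrix.vecMulVec_smul, ← hqa]
  · rw [smul_dotProduct, hra]; simp

/-- The matrix `1 - e_i c_i`. -/
def zmat {R : Type*} [CommRing R] (c : Matrix (Fin 4) (Fin 4) R) (i : Fin 4) :
    Matrix (Fin 4) (Fin 4) R := Matrix.of fun s t => (1 : Matrix (Fin 4) (Fin 4) R) s t - if s = i then c i t else 0

theorem zcomm {R : Type*} [CommRing R] [Invertible (2 : R)] (c : Matrix (Fin 4) (Fin 4) R)
    (hd : ∀ i, c i i = 2) (i j : Fin 4) (hij : i ≠ j)
    (h : zmat c i * zmat c j = zmat c j * zmat c i) : c i j = 0 := by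
  have := congrFun (congrFun h i) j
  have h2 : c i j * 2 = 0 := by
    fin_cases i <;> fin_cases j <;>
    simp [zmat, Matrix.mul_apply, Fin.sum_univ_four, Matrix.one_apply, hd] at this hij ⊢ <;>
    linear_combination (-1 : R) * this
  simpa using congrArg (· * ⅟(2 : R)) h2

theorem zbraid {R : Type*} [CommRing R] [Invertible (2 : R)] (c : Matrix (Fin 4) (Fin 4) R)
    (hd : ∀ i, c i i = 2) (i j : Fin 4) (hij : i ≠ j)
    (h : (zmat c i * zmat c j) * (zmat c i * zmat c j) = zmat c j * zmat c i) :
    c i j * c j i = 1 := by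
  have := congrFun (congrFun h j) j
  have h2 : (c i j * c j i) * 2 = 1 * 2 := by
    fin_cases i <;> fin_cases j <;>
    simp [zmat, Matrix.mul_apply, Fin.sum_univ_four, Matrix.one_apply, hd] at this hij ⊢ <;>
    linear_combination (-1 : R) * this
  exact (isUnit_of_invertible (2 : R)).mul_right_cancel h2

/-- Over a commutative local ring `R` with `2` invertible (maximal
ideal `J`), let `w₁, w₂, w₃, w₄` be the `4 × 4` matrices equal to the identity except:
row 1 of `w₁` is `(-1,1,0,0)`; row 2 of `w₂` is `(1,-1,1,1)`; row 3 of `w₃` is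
`(0,1,-1,0)`; row 4 of `w₄` is `(0,1,0,-1)`.  If `yᵢ ≡ wᵢ (mod J)`, `yᵢ² = 1`,
`y₁, y₃, y₄` pairwise commute and `(y₁y₂)² = y₂y₁`, `(y₃y₂)² = y₂y₃`, `(y₄y₂)² = y₂y₄`,
then some `g ∈ GL₄(R)` satisfies `g·yᵢ·g⁻¹ = wᵢ` for `i = 1,2,3,4`. -/
theorem stmt8 {R : Type*} [CommRing R] [IsLocalRing R] [Invertible (2 : R)]
    (w y : Fin 4 → Matrix (Fin 4) (Fin 4) R)
    (hw1 : w 0 = !![(-1 : R), 1, 0, 0; 0, 1, 0, 0; 0, 0, 1, 0; 0, 0, 0, 1])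
    (hw2 : w 1 = !![(1 : R), 0, 0, 0; 1, -1, 1, 1; 0, 0, 1, 0; 0, 0, 0, 1])
    (hw3 : w 2 = !![(1 : R), 0, 0, 0; 0, 1, 0, 0; 0, 1, -1, 0; 0, 0, 0, 1])
    (hw4 : w 3 = !![(1 : R), 0, 0, 0; 0, 1, 0, 0; 0, 0, 1, 0; 0, 1, 0, -1])
    (hmod : ∀ i, ∀ p q, (y i - w i) p q ∈ IsLocalRing.maximalIdeal R)
    (hsq : ∀ i, y i * y i = 1)
    (hc13 : y 0 * y 2 = y 2 * y 0)
    (hc14 : y 0 * y 3 = y 3 * y 0)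
    (hc34 : y 2 * y 3 = y 3 * y 2)
    (hb1 : (y 0 * y 1) * (y 0 * y 1) = y 1 * y 0)
    (hb3 : (y 2 * y 1) * (y 2 * y 1) = y 1 * y 2)
    (hb4 : (y 3 * y 1) * (y 3 * y 1) = y 1 * y 3) :
    ∃ g : GL (Fin 4) R, ∀ i,
      (g : Matrix (Fin 4) (Fin 4) R) * y i * ((g⁻¹ : GL (Fin 4) R) : Matrix (Fin 4) (Fin 4) R)
        = w i := by
  have hres : ∀ i, (IsLocalRing.residue R).mapMatrix (y i) = (IsLocalRing.residue R).mapMatrix (w i) := by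
    intro i
    ext p q
    have := (IsLocalRing.residue_eq_zero_iff _).2 (hmod i p q)
    simpa [sub_eq_zero] using this
  have hr : ∀ i, ∃ a b : Fin 4 → R, y i = 1 - Matrix.vecMulVec a b ∧ b ⬝ᵥ a = 2 ∧
      ∀ j, IsLocalRing.residue R (a j)
        = IsLocalRing.residue R ((1 : Matrix (Fin 4) (Fin 4) R) j i) := by
    intro i
    apply rank_one (w i) (y i) i (hres i) (hsq i)
    · fin_cases i <;> simp only [Fin.zero_eta, Fin.mk_one, Fin.reduceFinMk, hw1, hw2, hw3, hw4] <;>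
      ext s t <;> fin_cases s <;> fin_cases t <;>
      simp [Matrix.mul_apply, Fin.sum_univ_four, Matrix.single_apply, Matrix.one_apply] <;> norm_num
    · fin_cases i <;> simp only [Fin.zero_eta, Fin.mk_one, Fin.reduceFinMk, hw1, hw2, hw3, hw4] <;>
      ext s t <;> fin_cases s <;> fin_cases t <;>
      simp [Matrix.mul_apply, Fin.sum_univ_four, Matrix.single_apply, Matrix.one_apply]
  choose a b hy hba ha using hr
  obtain ⟨A, hA⟩ : ∃ A : Matrix (Fin 4) (Fin 4) R, A = Matrix.of fun s t => a t s := ⟨_, rfl⟩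
  have hAu : IsUnit A := by
    apply unit_lift A 1 _ isUnit_one
    ext s t
    simpa [hA] using ha t s
  obtain ⟨u, hu⟩ := hAu
  obtain ⟨c, hc⟩ : ∃ c : Matrix (Fin 4) (Fin 4) R, c = Matrix.of fun s t => b s ⬝ᵥ a t := ⟨_, rfl⟩
  have hd : ∀ i, c i i = 2 := by intro i; simp [hc, hba]
  have hyA : ∀ i, y i * A = A * zmat c i := by
    intro i
    have hz : zmat c i = 1 - Matrix.vecMulVec (Pi.single i 1) (c i) := by
      ext s t
      simp [zmat, Matrix.vecMulVec_apply, Pi.single_apply]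
    rw [hz, hy, sub_mul, mul_sub, one_mul, mul_one, Matrix.vecMulVec_mul, Matrix.mul_vecMulVec]
    congr 2
    · ext s; simp [hA]
    · ext s; simp [hA, hc, Matrix.vecMul, dotProduct]
  have hz : ∀ i, zmat c i = (↑u⁻¹ : Matrix (Fin 4) (Fin 4) R) * y i * u := by
    intro i
    rw [mul_assoc, hu, hyA, ← mul_assoc, ← hu]; simp
  have hmul : ∀ X Y : Matrix (Fin 4) (Fin 4) R,
      ((↑u⁻¹ : Matrix (Fin 4) (Fin 4) R) * X * u) * ((↑u⁻¹ : Matrix (Fin 4) (Fin 4) R) * Y * u)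
        = (↑u⁻¹ : Matrix (Fin 4) (Fin 4) R) * (X * Y) * u := by
    intro X Y; simp [mul_assoc]
  have cm : ∀ i j, i ≠ j → y i * y j = y j * y i → c i j = 0 := by
    intro i j hij h
    apply zcomm c hd i j hij
    rw [hz, hz, hmul, hmul, h]
  have br : ∀ i j, i ≠ j → (y i * y j) * (y i * y j) = y j * y i → c i j * c j i = 1 := by
    intro i j hij h
    apply zbraid c hd i j hij
    rw [hz, hz, hmul, hmul, hmul, h]
  have c02 := cm 0 2 (by decide) hc13
  have c20 := cm 2 0 (by decide) hc13.symm
  have c03 := cm 0 3 (by decide) hc14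
  have c30 := cm 3 0 (by decide) hc14.symm
  have c23 := cm 2 3 (by decide) hc34
  have c32 := cm 3 2 (by decide) hc34.symm
  have b0 := br 0 1 (by decide) hb1
  have b2 := br 2 1 (by decide) hb3
  have b3 := br 3 1 (by decide) hb4
  have d0 := hd 0
  have d1 := hd 1
  have d2 := hd 2
  have d3 := hd 3
  let D : Matrix (Fin 4) (Fin 4) R := Matrix.diagonal ![-c 1 0, 1, -c 1 2, -c 1 3]
  let D' : Matrix (Fin 4) (Fin 4) R := Matrix.diagonal ![-c 0 1, 1, -c 2 1, -c 3 1]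
  have hDD' : D * D' = 1 := by
    simp only [D, D', Matrix.diagonal_mul_diagonal]
    rw [← Matrix.diagonal_one]
    congr 1
    ext s
    fin_cases s <;> simp <;> first | linear_combination b0 | linear_combination b2 | linear_combination b3
  have hD'D : D' * D = 1 := mul_eq_one_comm.1 hDD'
  let v : GL (Fin 4) R := ⟨D, D', hDD', hD'D⟩
  have hDz : ∀ i, D * zmat c i = w i * D := by
    intro i
    fin_cases i <;> simp only [Fin.zero_eta, Fin.mk_one, Fin.reduceFinMk, hw1, hw2, hw3, hw4] <;>
      ext s t <;> fin_cases s <;> fin_cases t <;>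
      simp [D, zmat, Matrix.mul_apply, Fin.sum_univ_four, Matrix.one_apply, Matrix.diagonal_apply,
        c02, c20, c03, c30, c23, c32, d0, d1, d2, d3] <;>
      first
        | ring1 | linear_combination b0 | linear_combination b2 | linear_combination b3
  refine ⟨v * u⁻¹, fun i => ?_⟩
  have h1 : ((v * u⁻¹ : GL (Fin 4) R) : Matrix (Fin 4) (Fin 4) R) * y i
      = w i * ((v * u⁻¹ : GL (Fin 4) R) : Matrix (Fin 4) (Fin 4) R) := by
    have e : (↑u⁻¹ : Matrix (Fin 4) (Fin 4) R) * y i = zmat c i * (↑u⁻¹ : Matrix (Fin 4) (Fin 4) R) := by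
      rw [hz]; simp [mul_assoc]
    have hv : (v : Matrix (Fin 4) (Fin 4) R) = D := rfl
    rw [Units.val_mul, mul_assoc, e, ← mul_assoc, hv, hDz, mul_assoc]
  rw [h1, mul_assoc, ← Units.val_mul, mul_inv_cancel, Units.val_one, mul_one]
end

section
/- Let f : R → R be a map that is additive (f(x + y) = f(x) + f(y) for all x, y ∈ R), satisfies f(1) = 1, and satisfies f(uv) = f(u)·f(v) for all units u, v of R. Then f(xy) = f(x)·f(y) for all x, y ∈ R; that is, f is a ring homomorphism. -/
/-- Let `R` be a commutative local ring with `2` invertible, and let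
`f : R → R` be additive, with `f 1 = 1`, and multiplicative on units.  Then
`f (x*y) = f x * f y` for all `x, y ∈ R`; that is, `f` is a ring homomorphism. -/
theorem stmt10 {R : Type*} [CommRing R] [IsLocalRing R] [Invertible (2 : R)]
    (f : R → R)
    (hadd : ∀ x y : R, f (x + y) = f x + f y)
    (hone : f 1 = 1)
    (hunits : ∀ u v : R, IsUnit u → IsUnit v → f (u * v) = f u * f v) :
    ∀ x y : R, f (x * y) = f x * f y := by
  have key : ∀ x : R, ¬ IsUnit x → IsUnit (1 + x) := by
    intro x hx
    rcases IsLocalRing.isUnit_or_isUnit_of_add_one (a := 1 + x) (b := -x) (by ring) with h | h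
    · exact h
    · exact absurd (by simpa using h) hx
  have h1 : ∀ x v : R, IsUnit v → f (x * v) = f x * f v := by
    intro x v hv
    by_cases hx : IsUnit x
    · exact hunits x v hx hv
    · have h := hunits (1 + x) v (key x hx) hv
      rw [add_mul, hadd, hadd, one_mul, hone] at h
      linear_combination h
  intro x y
  by_cases hy : IsUnit y
  · exact h1 x y hy
  · have h := h1 x (1 + y) (key y hy)
    rw [mul_add, hadd, hadd, mul_one, hone] at h
    linear_combination h
end

section
/- Let x be an 8×8 matrix over R such that: (i) x ≡ X (mod J); (ii) the entries of x in rows 1, 2, 7, 8 vanish outside columns 1, 2, 7, 8, and the entries of x in rows 3, 4, 5, 6 vanish outside columns 3, 4, 5, 6; (iii) the (1,8) entry of x equals 1 and the (2,8) entry of x equals 0. Put x' = w₂·x·w₂⁻¹ and x'' = w₁·x'·w₁⁻¹. If x·x' = x'·x, h₂·x·h₂·x = 1, x·w₁·x·w₁⁻¹ = w₁·h₂·x·h₂, and x''·x = x'·x·x'', then x = X. -/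
open Matrix

/-- The matrix `w₁` of Section 4 of the paper. -/
def w₁ (R : Type*) [CommRing R] : Matrix (Fin 8) (Fin 8) R :=
  !![0, -1, 0, 0, 0, 0, 0, 0;
     -1, 0, 0, 0, 0, 0, 0, 0;
     0, 0, 0, 0, 1, 0, 0, 0;
     0, 0, 0, 0, 0, 1, 0, 0;
     0, 0, -1, 0, 0, 0, 0, 0;
     0, 0, 0, -1, 0, 0, 0, 0;
     0, 0, 0, 0, 0, 0, -1, 1;
     0, 0, 0, 0, 0, 0, 0, 1]

/-- The matrix `w₂` of Section 4 of the paper. -/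
def w₂ (R : Type*) [CommRing R] : Matrix (Fin 8) (Fin 8) R :=
  !![0, 0, 0, 0, -1, 0, 0, 0;
     0, 0, 0, 0, 0, -1, 0, 0;
     0, 0, 0, -1, 0, 0, 0, 0;
     0, 0, -1, 0, 0, 0, 0, 0;
     1, 0, 0, 0, 0, 0, 0, 0;
     0, 1, 0, 0, 0, 0, 0, 0;
     0, 0, 0, 0, 0, 0, 1, 0;
     0, 0, 0, 0, 0, 0, 1, -1]

/-- The matrix `X = x_{α₁}(1)` of Section 4 of the paper. -/
def XX (R : Type*) [CommRing R] : Matrix (Fin 8) (Fin 8) R :=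
  !![1, -1, 0, 0, 0, 0, -2, 1;
     0, 1, 0, 0, 0, 0, 0, 0;
     0, 0, 1, 0, 0, 0, 0, 0;
     0, 0, 0, 1, 0, 1, 0, 0;
     0, 0, -1, 0, 1, 0, 0, 0;
     0, 0, 0, 0, 0, 1, 0, 0;
     0, 1, 0, 0, 0, 0, 1, 0;
     0, 0, 0, 0, 0, 0, 0, 1]

set_option linter.all false

/-- The inverse of `w₁`. -/
def v₁ (R : Type*) [CommRing R] : Matrix (Fin 8) (Fin 8) R :=
  !![0, -1, 0, 0, 0, 0, 0, 0;
     -1, 0, 0, 0, 0, 0, 0, 0;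
     0, 0, 0, 0, -1, 0, 0, 0;
     0, 0, 0, 0, 0, -1, 0, 0;
     0, 0, 1, 0, 0, 0, 0, 0;
     0, 0, 0, 1, 0, 0, 0, 0;
     0, 0, 0, 0, 0, 0, -1, 1;
     0, 0, 0, 0, 0, 0, 0, 1]

/-- The inverse of `w₂`. -/
def v₂ (R : Type*) [CommRing R] : Matrix (Fin 8) (Fin 8) R :=
  !![0, 0, 0, 0, 1, 0, 0, 0;
     0, 0, 0, 0, 0, 1, 0, 0;
     0, 0, 0, -1, 0, 0, 0, 0;
     0, 0, -1, 0, 0, 0, 0, 0;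
     -1, 0, 0, 0, 0, 0, 0, 0;
     0, -1, 0, 0, 0, 0, 0, 0;
     0, 0, 0, 0, 0, 0, 1, 0;
     0, 0, 0, 0, 0, 0, 1, -1]

/-- The matrix `h₂`. -/
def hh (R : Type*) [CommRing R] : Matrix (Fin 8) (Fin 8) R :=
  !![-1, 0, 0, 0, 0, 0, 0, 0;
     0, -1, 0, 0, 0, 0, 0, 0;
     0, 0, 1, 0, 0, 0, 0, 0;
     0, 0, 0, 1, 0, 0, 0, 0;
     0, 0, 0, 0, -1, 0, 0, 0;
     0, 0, 0, 0, 0, -1, 0, 0;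
     0, 0, 0, 0, 0, 0, 1, 0;
     0, 0, 0, 0, 0, 0, 0, 1]

/-- The conjugate `w₂ X w₂⁻¹`. -/
def XX1 (R : Type*) [CommRing R] : Matrix (Fin 8) (Fin 8) R :=
  !![1, 0, 0, -1, 0, 0, 0, 0;
     0, 1, 0, 0, 0, 0, 0, 0;
     0, 1, 1, 0, 0, 0, 0, 0;
     0, 0, 0, 1, 0, 0, 0, 0;
     0, 0, 0, 0, 1, -1, -1, -1;
     0, 0, 0, 0, 0, 1, 0, 0;
     0, 0, 0, 0, 0, 1, 1, 0;
     0, 0, 0, 0, 0, 1, 0, 1]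

/-- The double conjugate `w₁ w₂ X w₂⁻¹ w₁⁻¹`. -/
def XX2 (R : Type*) [CommRing R] : Matrix (Fin 8) (Fin 8) R :=
  !![1, 0, 0, 0, 0, 0, 0, 0;
     0, 1, 0, 0, 0, -1, 0, 0;
     0, 0, 1, -1, 0, 0, 1, -2;
     0, 0, 0, 1, 0, 0, 0, 0;
     1, 0, 0, 0, 1, 0, 0, 0;
     0, 0, 0, 0, 0, 1, 0, 0;
     0, 0, 0, 0, 0, 0, 1, 0;
     0, 0, 0, 1, 0, 0, 0, 1]

/-- The product `h₂ X h₂`. -/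
def XH (R : Type*) [CommRing R] : Matrix (Fin 8) (Fin 8) R :=
  !![1, -1, 0, 0, 0, 0, 2, -1;
     0, 1, 0, 0, 0, 0, 0, 0;
     0, 0, 1, 0, 0, 0, 0, 0;
     0, 0, 0, 1, 0, -1, 0, 0;
     0, 0, 1, 0, 1, 0, 0, 0;
     0, 0, 0, 0, 0, 1, 0, 0;
     0, -1, 0, 0, 0, 0, 1, 0;
     0, 0, 0, 0, 0, 0, 0, 1]

/-- The conjugate `w₁ X w₁⁻¹`. -/
def XW (R : Type*) [CommRing R] : Matrix (Fin 8) (Fin 8) R :=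
  !![1, 0, 0, 0, 0, 0, 0, 0;
     -1, 1, 0, 0, 0, 0, -2, 1;
     0, 0, 1, 0, 1, 0, 0, 0;
     0, 0, 0, 1, 0, 0, 0, 0;
     0, 0, 0, 0, 1, 0, 0, 0;
     0, 0, 0, -1, 0, 1, 0, 0;
     1, 0, 0, 0, 0, 0, 1, 0;
     0, 0, 0, 0, 0, 0, 0, 1]

/-- The product of `X` and `XX2`. -/
def XZ (R : Type*) [CommRing R] : Matrix (Fin 8) (Fin 8) R :=
  !![1, -1, 0, 1, 0, 1, -2, 1;
     0, 1, 0, 0, 0, -1, 0, 0;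
     0, 0, 1, -1, 0, 0, 1, -2;
     0, 0, 0, 1, 0, 1, 0, 0;
     1, 0, -1, 1, 1, 0, -1, 2;
     0, 0, 0, 0, 0, 1, 0, 0;
     0, 1, 0, 0, 0, -1, 1, 0;
     0, 0, 0, 1, 0, 0, 0, 1]

/-- The product of `XX1` and `X`. -/
def XU (R : Type*) [CommRing R] : Matrix (Fin 8) (Fin 8) R :=
  !![1, -1, 0, -1, 0, -1, -2, 1;
     0, 1, 0, 0, 0, 0, 0, 0;
     0, 1, 1, 0, 0, 0, 0, 0;
     0, 0, 0, 1, 0, 1, 0, 0;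
     0, -1, -1, 0, 1, -1, -1, -1;
     0, 0, 0, 0, 0, 1, 0, 0;
     0, 1, 0, 0, 0, 1, 1, 0;
     0, 0, 0, 0, 0, 1, 0, 1]

theorem w1_v1 (R : Type*) [CommRing R] : w₁ R * v₁ R = 1 := by
  ext i j
  fin_cases i <;> fin_cases j <;>
    simp [w₁, v₁, Matrix.mul_apply, Fin.sum_univ_eight] <;> norm_num

theorem w2_v2 (R : Type*) [CommRing R] : w₂ R * v₂ R = 1 := by
  ext i j
  fin_cases i <;> fin_cases j <;>
    simp [w₂, v₂, Matrix.mul_apply, Fin.sum_univ_eight] <;> norm_num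

theorem w2_w2 (R : Type*) [CommRing R] : w₂ R * w₂ R = hh R := by
  ext i j
  fin_cases i <;> fin_cases j <;>
    simp [w₂, hh, Matrix.mul_apply, Fin.sum_univ_eight] <;> norm_num

theorem w2_XX (R : Type*) [CommRing R] : w₂ R * XX R = XX1 R * w₂ R := by
  ext i j
  fin_cases i <;> fin_cases j <;>
    simp [w₂, XX, XX1, Matrix.mul_apply, Fin.sum_univ_eight] <;> norm_num

theorem w1_XX1 (R : Type*) [CommRing R] : w₁ R * XX1 R = XX2 R * w₁ R := by
  ext i j
  fin_cases i <;> fin_cases j <;>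
    simp [w₁, XX1, XX2, Matrix.mul_apply, Fin.sum_univ_eight] <;> norm_num

theorem w1_XX (R : Type*) [CommRing R] : w₁ R * XX R = XW R * w₁ R := by
  ext i j
  fin_cases i <;> fin_cases j <;>
    simp [w₁, XX, XW, Matrix.mul_apply, Fin.sum_univ_eight] <;> norm_num

theorem hh_XX (R : Type*) [CommRing R] : hh R * XX R = XH R * hh R := by
  ext i j
  fin_cases i <;> fin_cases j <;>
    simp [XX, hh, XH, Matrix.mul_apply, Fin.sum_univ_eight] <;> norm_num

theorem hh_hh (R : Type*) [CommRing R] : hh R * hh R = 1 := by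
  ext i j
  fin_cases i <;> fin_cases j <;>
    simp [hh, Matrix.mul_apply, Fin.sum_univ_eight] <;> norm_num

theorem XX_XX2 (R : Type*) [CommRing R] : XX R * XX2 R = XZ R := by
  ext i j
  fin_cases i <;> fin_cases j <;>
    simp [XX, XX2, XZ, Matrix.mul_apply, Fin.sum_univ_eight] <;> norm_num

theorem XX1_XX (R : Type*) [CommRing R] : XX1 R * XX R = XU R := by
  ext i j
  fin_cases i <;> fin_cases j <;>
    simp [XX, XX1, XU, Matrix.mul_apply, Fin.sum_univ_eight] <;> norm_num

theorem XX_XX1 (R : Type*) [CommRing R] : XX R * XX1 R = XU R := by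
  ext i j
  fin_cases i <;> fin_cases j <;>
    simp [XX, XX1, XU, Matrix.mul_apply, Fin.sum_univ_eight] <;> norm_num

theorem XH_XX (R : Type*) [CommRing R] : XH R * XX R = 1 := by
  ext i j
  fin_cases i <;> fin_cases j <;>
    simp [XX, XH, Matrix.mul_apply, Fin.sum_univ_eight] <;> norm_num

theorem XX_XW (R : Type*) [CommRing R] : XX R * XW R = w₁ R * XH R := by
  ext i j
  fin_cases i <;> fin_cases j <;>
    simp [w₁, XX, XH, XW, Matrix.mul_apply, Fin.sum_univ_eight] <;> norm_num

theorem XX2_XX (R : Type*) [CommRing R] : XX2 R * XX R = XX1 R * XZ R := by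
  ext i j
  fin_cases i <;> fin_cases j <;>
    simp [XX, XX1, XX2, XZ, Matrix.mul_apply, Fin.sum_univ_eight] <;> norm_num

/-- Auxiliary matrix with entries linear in `d`. -/
def dm {S : Type*} [CommRing S] (d : Fin 8 → Fin 8 → S) : Matrix (Fin 8) (Fin 8) S :=
  !![d 0 0, d 0 1, 0, 0, 0, 0, d 0 6, 0;
     d 1 0, d 1 1, 0, 0, 0, 0, d 1 6, 0;
     0, 0, d 2 2, d 2 3, d 2 4, d 2 5, 0, 0;
     0, 0, d 3 2, d 3 3, d 3 4, d 3 5, 0, 0;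
     0, 0, d 4 2, d 4 3, d 4 4, d 4 5, 0, 0;
     0, 0, d 5 2, d 5 3, d 5 4, d 5 5, 0, 0;
     d 6 0, d 6 1, 0, 0, 0, 0, d 6 6, d 6 7;
     d 7 0, d 7 1, 0, 0, 0, 0, d 7 6, d 7 7]

/-- Auxiliary matrix with entries linear in `d`. -/
def dA {S : Type*} [CommRing S] (d : Fin 8 → Fin 8 → S) : Matrix (Fin 8) (Fin 8) S :=
  !![0, 0, -d 4 2, -d 4 3, -d 4 4, -d 4 5, 0, 0;
     0, 0, -d 5 2, -d 5 3, -d 5 4, -d 5 5, 0, 0;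
     0, 0, -d 3 2, -d 3 3, -d 3 4, -d 3 5, 0, 0;
     0, 0, -d 2 2, -d 2 3, -d 2 4, -d 2 5, 0, 0;
     d 0 0, d 0 1, 0, 0, 0, 0, d 0 6, 0;
     d 1 0, d 1 1, 0, 0, 0, 0, d 1 6, 0;
     d 6 0, d 6 1, 0, 0, 0, 0, d 6 6, d 6 7;
     d 6 0 - d 7 0, d 6 1 - d 7 1, 0, 0, 0, 0, d 6 6 - d 7 6, d 6 7 - d 7 7]

theorem dA_eq {S : Type*} [CommRing S] (d : Fin 8 → Fin 8 → S) :
    w₂ S * dm d = dA d := by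
  ext i j
  fin_cases i <;> fin_cases j <;>
    (simp only [w₂, dm, dA, Matrix.mul_apply, Matrix.add_apply, Fin.sum_univ_eight, Matrix.of_apply, Matrix.cons_val,
      Fin.reduceFinMk, Fin.zero_eta, Fin.mk_one, Fin.isValue, zero_mul, mul_zero, zero_add, add_zero, one_mul, mul_one, neg_mul, mul_neg, neg_neg, neg_zero]; try ring)

/-- Auxiliary matrix with entries linear in `d`. -/
def dD1 {S : Type*} [CommRing S] (d : Fin 8 → Fin 8 → S) : Matrix (Fin 8) (Fin 8) S :=
  !![d 4 4, d 4 5, d 4 3, d 4 2, 0, 0, 0, 0;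
     d 5 4, d 5 5, d 5 3, d 5 2, 0, 0, 0, 0;
     d 3 4, d 3 5, d 3 3, d 3 2, 0, 0, 0, 0;
     d 2 4, d 2 5, d 2 3, d 2 2, 0, 0, 0, 0;
     0, 0, 0, 0, d 0 0, d 0 1, d 0 6, 0;
     0, 0, 0, 0, d 1 0, d 1 1, d 1 6, 0;
     0, 0, 0, 0, d 6 0, d 6 1, d 6 6 + d 6 7, -d 6 7;
     0, 0, 0, 0, d 6 0 - d 7 0, d 6 1 - d 7 1, d 6 6 - d 7 6 + d 6 7 - d 7 7, -d 6 7 + d 7 7]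

theorem dD1_eq {S : Type*} [CommRing S] (d : Fin 8 → Fin 8 → S) :
    dA d * v₂ S = dD1 d := by
  ext i j
  fin_cases i <;> fin_cases j <;>
    (simp only [v₂, dA, dD1, Matrix.mul_apply, Matrix.add_apply, Fin.sum_univ_eight, Matrix.of_apply, Matrix.cons_val,
      Fin.reduceFinMk, Fin.zero_eta, Fin.mk_one, Fin.isValue, zero_mul, mul_zero, zero_add, add_zero, one_mul, mul_one, neg_mul, mul_neg, neg_neg, neg_zero]; try ring)

/-- Auxiliary matrix with entries linear in `d`. -/
def dB {S : Type*} [CommRing S] (d : Fin 8 → Fin 8 → S) : Matrix (Fin 8) (Fin 8) S :=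
  !![-d 5 4, -d 5 5, -d 5 3, -d 5 2, 0, 0, 0, 0;
     -d 4 4, -d 4 5, -d 4 3, -d 4 2, 0, 0, 0, 0;
     0, 0, 0, 0, d 0 0, d 0 1, d 0 6, 0;
     0, 0, 0, 0, d 1 0, d 1 1, d 1 6, 0;
     -d 3 4, -d 3 5, -d 3 3, -d 3 2, 0, 0, 0, 0;
     -d 2 4, -d 2 5, -d 2 3, -d 2 2, 0, 0, 0, 0;
     0, 0, 0, 0, -d 7 0, -d 7 1, -d 7 6 - d 7 7, d 7 7;
     0, 0, 0, 0, d 6 0 - d 7 0, d 6 1 - d 7 1, d 6 6 - d 7 6 + d 6 7 - d 7 7, -d 6 7 + d 7 7]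

theorem dB_eq {S : Type*} [CommRing S] (d : Fin 8 → Fin 8 → S) :
    w₁ S * dD1 d = dB d := by
  ext i j
  fin_cases i <;> fin_cases j <;>
    (simp only [w₁, dD1, dB, Matrix.mul_apply, Matrix.add_apply, Fin.sum_univ_eight, Matrix.of_apply, Matrix.cons_val,
      Fin.reduceFinMk, Fin.zero_eta, Fin.mk_one, Fin.isValue, zero_mul, mul_zero, zero_add, add_zero, one_mul, mul_one, neg_mul, mul_neg, neg_neg, neg_zero]; try ring)

/-- Auxiliary matrix with entries linear in `d`. -/
def dD2 {S : Type*} [CommRing S] (d : Fin 8 → Fin 8 → S) : Matrix (Fin 8) (Fin 8) S :=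
  !![d 5 5, d 5 4, 0, 0, d 5 3, d 5 2, 0, 0;
     d 4 5, d 4 4, 0, 0, d 4 3, d 4 2, 0, 0;
     0, 0, d 0 0, d 0 1, 0, 0, -d 0 6, d 0 6;
     0, 0, d 1 0, d 1 1, 0, 0, -d 1 6, d 1 6;
     d 3 5, d 3 4, 0, 0, d 3 3, d 3 2, 0, 0;
     d 2 5, d 2 4, 0, 0, d 2 3, d 2 2, 0, 0;
     0, 0, -d 7 0, -d 7 1, 0, 0, d 7 6 + d 7 7, -d 7 6;
     0, 0, d 6 0 - d 7 0, d 6 1 - d 7 1, 0, 0, -d 6 6 + d 7 6 - d 6 7 + d 7 7, d 6 6 - d 7 6]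

theorem dD2_eq {S : Type*} [CommRing S] (d : Fin 8 → Fin 8 → S) :
    dB d * v₁ S = dD2 d := by
  ext i j
  fin_cases i <;> fin_cases j <;>
    (simp only [v₁, dB, dD2, Matrix.mul_apply, Matrix.add_apply, Fin.sum_univ_eight, Matrix.of_apply, Matrix.cons_val,
      Fin.reduceFinMk, Fin.zero_eta, Fin.mk_one, Fin.isValue, zero_mul, mul_zero, zero_add, add_zero, one_mul, mul_one, neg_mul, mul_neg, neg_neg, neg_zero]; try ring)

/-- Auxiliary matrix with entries linear in `d`. -/
def dC {S : Type*} [CommRing S] (d : Fin 8 → Fin 8 → S) : Matrix (Fin 8) (Fin 8) S :=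
  !![-d 0 0, -d 0 1, 0, 0, 0, 0, -d 0 6, 0;
     -d 1 0, -d 1 1, 0, 0, 0, 0, -d 1 6, 0;
     0, 0, d 2 2, d 2 3, d 2 4, d 2 5, 0, 0;
     0, 0, d 3 2, d 3 3, d 3 4, d 3 5, 0, 0;
     0, 0, -d 4 2, -d 4 3, -d 4 4, -d 4 5, 0, 0;
     0, 0, -d 5 2, -d 5 3, -d 5 4, -d 5 5, 0, 0;
     d 6 0, d 6 1, 0, 0, 0, 0, d 6 6, d 6 7;
     d 7 0, d 7 1, 0, 0, 0, 0, d 7 6, d 7 7]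

theorem dC_eq {S : Type*} [CommRing S] (d : Fin 8 → Fin 8 → S) :
    hh S * dm d = dC d := by
  ext i j
  fin_cases i <;> fin_cases j <;>
    (simp only [hh, dm, dC, Matrix.mul_apply, Matrix.add_apply, Fin.sum_univ_eight, Matrix.of_apply, Matrix.cons_val,
      Fin.reduceFinMk, Fin.zero_eta, Fin.mk_one, Fin.isValue, zero_mul, mul_zero, zero_add, add_zero, one_mul, mul_one, neg_mul, mul_neg, neg_neg, neg_zero]; try ring)

/-- Auxiliary matrix with entries linear in `d`. -/
def dE {S : Type*} [CommRing S] (d : Fin 8 → Fin 8 → S) : Matrix (Fin 8) (Fin 8) S :=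
  !![d 0 0, d 0 1, 0, 0, 0, 0, -d 0 6, 0;
     d 1 0, d 1 1, 0, 0, 0, 0, -d 1 6, 0;
     0, 0, d 2 2, d 2 3, -d 2 4, -d 2 5, 0, 0;
     0, 0, d 3 2, d 3 3, -d 3 4, -d 3 5, 0, 0;
     0, 0, -d 4 2, -d 4 3, d 4 4, d 4 5, 0, 0;
     0, 0, -d 5 2, -d 5 3, d 5 4, d 5 5, 0, 0;
     -d 6 0, -d 6 1, 0, 0, 0, 0, d 6 6, d 6 7;
     -d 7 0, -d 7 1, 0, 0, 0, 0, d 7 6, d 7 7]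

theorem dE_eq {S : Type*} [CommRing S] (d : Fin 8 → Fin 8 → S) :
    dC d * hh S = dE d := by
  ext i j
  fin_cases i <;> fin_cases j <;>
    (simp only [hh, dC, dE, Matrix.mul_apply, Matrix.add_apply, Fin.sum_univ_eight, Matrix.of_apply, Matrix.cons_val,
      Fin.reduceFinMk, Fin.zero_eta, Fin.mk_one, Fin.isValue, zero_mul, mul_zero, zero_add, add_zero, one_mul, mul_one, neg_mul, mul_neg, neg_neg, neg_zero]; try ring)

/-- Auxiliary matrix with entries linear in `d`. -/
def dG0 {S : Type*} [CommRing S] (d : Fin 8 → Fin 8 → S) : Matrix (Fin 8) (Fin 8) S :=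
  !![-d 1 0, -d 1 1, 0, 0, 0, 0, -d 1 6, 0;
     -d 0 0, -d 0 1, 0, 0, 0, 0, -d 0 6, 0;
     0, 0, d 4 2, d 4 3, d 4 4, d 4 5, 0, 0;
     0, 0, d 5 2, d 5 3, d 5 4, d 5 5, 0, 0;
     0, 0, -d 2 2, -d 2 3, -d 2 4, -d 2 5, 0, 0;
     0, 0, -d 3 2, -d 3 3, -d 3 4, -d 3 5, 0, 0;
     -d 6 0 + d 7 0, -d 6 1 + d 7 1, 0, 0, 0, 0, -d 6 6 + d 7 6, -d 6 7 + d 7 7;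
     d 7 0, d 7 1, 0, 0, 0, 0, d 7 6, d 7 7]

theorem dG0_eq {S : Type*} [CommRing S] (d : Fin 8 → Fin 8 → S) :
    w₁ S * dm d = dG0 d := by
  ext i j
  fin_cases i <;> fin_cases j <;>
    (simp only [w₁, dm, dG0, Matrix.mul_apply, Matrix.add_apply, Fin.sum_univ_eight, Matrix.of_apply, Matrix.cons_val,
      Fin.reduceFinMk, Fin.zero_eta, Fin.mk_one, Fin.isValue, zero_mul, mul_zero, zero_add, add_zero, one_mul, mul_one, neg_mul, mul_neg, neg_neg, neg_zero]; try ring)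

/-- Auxiliary matrix with entries linear in `d`. -/
def dG {S : Type*} [CommRing S] (d : Fin 8 → Fin 8 → S) : Matrix (Fin 8) (Fin 8) S :=
  !![d 1 1, d 1 0, 0, 0, 0, 0, d 1 6, -d 1 6;
     d 0 1, d 0 0, 0, 0, 0, 0, d 0 6, -d 0 6;
     0, 0, d 4 4, d 4 5, -d 4 2, -d 4 3, 0, 0;
     0, 0, d 5 4, d 5 5, -d 5 2, -d 5 3, 0, 0;
     0, 0, -d 2 4, -d 2 5, d 2 2, d 2 3, 0, 0;
     0, 0, -d 3 4, -d 3 5, d 3 2, d 3 3, 0, 0;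
     d 6 1 - d 7 1, d 6 0 - d 7 0, 0, 0, 0, 0, d 6 6 - d 7 6, -d 6 6 + d 7 6 - d 6 7 + d 7 7;
     -d 7 1, -d 7 0, 0, 0, 0, 0, -d 7 6, d 7 6 + d 7 7]

theorem dG_eq {S : Type*} [CommRing S] (d : Fin 8 → Fin 8 → S) :
    dG0 d * v₁ S = dG d := by
  ext i j
  fin_cases i <;> fin_cases j <;>
    (simp only [v₁, dG0, dG, Matrix.mul_apply, Matrix.add_apply, Fin.sum_univ_eight, Matrix.of_apply, Matrix.cons_val,
      Fin.reduceFinMk, Fin.zero_eta, Fin.mk_one, Fin.isValue, zero_mul, mul_zero, zero_add, add_zero, one_mul, mul_one, neg_mul, mul_neg, neg_neg, neg_zero]; try ring)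

/-- Auxiliary matrix with entries linear in `d`. -/
def dK {S : Type*} [CommRing S] (d : Fin 8 → Fin 8 → S) : Matrix (Fin 8) (Fin 8) S :=
  !![-d 1 0, -d 1 1, 0, 0, 0, 0, d 1 6, 0;
     -d 0 0, -d 0 1, 0, 0, 0, 0, d 0 6, 0;
     0, 0, -d 4 2, -d 4 3, d 4 4, d 4 5, 0, 0;
     0, 0, -d 5 2, -d 5 3, d 5 4, d 5 5, 0, 0;
     0, 0, -d 2 2, -d 2 3, d 2 4, d 2 5, 0, 0;
     0, 0, -d 3 2, -d 3 3, d 3 4, d 3 5, 0, 0;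
     d 6 0 - d 7 0, d 6 1 - d 7 1, 0, 0, 0, 0, -d 6 6 + d 7 6, -d 6 7 + d 7 7;
     -d 7 0, -d 7 1, 0, 0, 0, 0, d 7 6, d 7 7]

theorem dK_eq {S : Type*} [CommRing S] (d : Fin 8 → Fin 8 → S) :
    w₁ S * dE d = dK d := by
  ext i j
  fin_cases i <;> fin_cases j <;>
    (simp only [w₁, dE, dK, Matrix.mul_apply, Matrix.add_apply, Fin.sum_univ_eight, Matrix.of_apply, Matrix.cons_val,
      Fin.reduceFinMk, Fin.zero_eta, Fin.mk_one, Fin.isValue, zero_mul, mul_zero, zero_add, add_zero, one_mul, mul_one, neg_mul, mul_neg, neg_neg, neg_zero]; try ring)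

/-- Auxiliary matrix with entries linear in `d`. -/
def dT {S : Type*} [CommRing S] (d : Fin 8 → Fin 8 → S) : Matrix (Fin 8) (Fin 8) S :=
  !![d 0 0, d 0 1, -d 3 2, -d 3 3, -d 3 4, -d 3 5, d 0 6, 0;
     d 1 0, d 1 1, 0, 0, 0, 0, d 1 6, 0;
     d 1 0, d 1 1, d 2 2, d 2 3, d 2 4, d 2 5, d 1 6, 0;
     0, 0, d 3 2, d 3 3, d 3 4, d 3 5, 0, 0;
     -d 6 0 - d 7 0, -d 6 1 - d 7 1, d 4 2 - d 5 2, d 4 3 - d 5 3, d 4 4 - d 5 4, d 4 5 - d 5 5, -d 6 6 - d 7 6, -d 6 7 - d 7 7;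
     0, 0, d 5 2, d 5 3, d 5 4, d 5 5, 0, 0;
     d 6 0, d 6 1, d 5 2, d 5 3, d 5 4, d 5 5, d 6 6, d 6 7;
     d 7 0, d 7 1, d 5 2, d 5 3, d 5 4, d 5 5, d 7 6, d 7 7]

theorem dT_eq {S : Type*} [CommRing S] (d : Fin 8 → Fin 8 → S) :
    XX1 S * dm d = dT d := by
  ext i j
  fin_cases i <;> fin_cases j <;>
    (simp only [XX1, dm, dT, Matrix.mul_apply, Matrix.add_apply, Fin.sum_univ_eight, Matrix.of_apply, Matrix.cons_val,
      Fin.reduceFinMk, Fin.zero_eta, Fin.mk_one, Fin.isValue, zero_mul, mul_zero, zero_add, add_zero, one_mul, mul_one, neg_mul, mul_neg, neg_neg, neg_zero]; try ring)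


theorem linear_core {S : Type*} [CommRing S] (d : Fin 8 → Fin 8 → S)
    (c1 : dm d * XX1 S + XX S * dD1 d = dD1 d * XX S + XX1 S * dm d)
    (c2 : dE d * XX S + XH S * dm d = 0)
    (c3 : dm d * XW S + XX S * dG d = dK d)
    (c4 : dD2 d * XX S + XX2 S * dm d = dD1 d * XZ S + dT d * XX2 S + XU S * dD2 d) :
    dm d = 0 := by
  have e1_00 := congr_fun (congr_fun c1 0) 0
  have e1_01 := congr_fun (congr_fun c1 0) 1
  have e1_13 := congr_fun (congr_fun c1 1) 3
  have e1_15 := congr_fun (congr_fun c1 1) 5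
  have e1_25 := congr_fun (congr_fun c1 2) 5
  have e1_27 := congr_fun (congr_fun c1 2) 7
  have e1_61 := congr_fun (congr_fun c1 6) 1
  have e1_62 := congr_fun (congr_fun c1 6) 2
  have e1_72 := congr_fun (congr_fun c1 7) 2
  have e2_07 := congr_fun (congr_fun c2 0) 7
  have e2_25 := congr_fun (congr_fun c2 2) 5
  have e2_42 := congr_fun (congr_fun c2 4) 2
  have e2_71 := congr_fun (congr_fun c2 7) 1
  have e3_17 := congr_fun (congr_fun c3 1) 7
  have e3_24 := congr_fun (congr_fun c3 2) 4
  have e3_55 := congr_fun (congr_fun c3 5) 5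
  have e3_60 := congr_fun (congr_fun c3 6) 0
  have e3_67 := congr_fun (congr_fun c3 6) 7
  have e3_77 := congr_fun (congr_fun c3 7) 7
  have e4_13 := congr_fun (congr_fun c4 1) 3
  have e4_15 := congr_fun (congr_fun c4 1) 5
  have e4_17 := congr_fun (congr_fun c4 1) 7
  have e4_22 := congr_fun (congr_fun c4 2) 2
  have e4_62 := congr_fun (congr_fun c4 6) 2
  have e4_64 := congr_fun (congr_fun c4 6) 4
  have e4_66 := congr_fun (congr_fun c4 6) 6
  have e4_67 := congr_fun (congr_fun c4 6) 7
  have e4_70 := congr_fun (congr_fun c4 7) 0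
  have e4_72 := congr_fun (congr_fun c4 7) 2
  have e4_77 := congr_fun (congr_fun c4 7) 7
  simp only [XX1, XX, dm, dD1, Matrix.mul_apply, Matrix.add_apply, Fin.sum_univ_eight, Matrix.of_apply, Matrix.cons_val,
      Fin.reduceFinMk, Fin.zero_eta, Fin.mk_one, Fin.isValue, zero_mul, mul_zero, zero_add, add_zero, one_mul, mul_one, neg_mul, mul_neg, neg_neg, neg_zero] at e1_00 e1_01 e1_13 e1_15 e1_25 e1_27 e1_61 e1_62 e1_72
  simp only [dE, XX, XH, dm, Matrix.zero_apply, Matrix.mul_apply, Matrix.add_apply, Fin.sum_univ_eight, Matrix.of_apply, Matrix.cons_val,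
      Fin.reduceFinMk, Fin.zero_eta, Fin.mk_one, Fin.isValue, zero_mul, mul_zero, zero_add, add_zero, one_mul, mul_one, neg_mul, mul_neg, neg_neg, neg_zero] at e2_07 e2_25 e2_42 e2_71
  simp only [dm, XW, XX, dG, dK, Matrix.mul_apply, Matrix.add_apply, Fin.sum_univ_eight, Matrix.of_apply, Matrix.cons_val,
      Fin.reduceFinMk, Fin.zero_eta, Fin.mk_one, Fin.isValue, zero_mul, mul_zero, zero_add, add_zero, one_mul, mul_one, neg_mul, mul_neg, neg_neg, neg_zero] at e3_17 e3_24 e3_55 e3_60 e3_67 e3_77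
  simp only [dD2, XX, XX2, dm, dD1, XZ, dT, XU, Matrix.mul_apply, Matrix.add_apply, Fin.sum_univ_eight, Matrix.of_apply, Matrix.cons_val,
      Fin.reduceFinMk, Fin.zero_eta, Fin.mk_one, Fin.isValue, zero_mul, mul_zero, zero_add, add_zero, one_mul, mul_one, neg_mul, mul_neg, neg_neg, neg_zero] at e4_13 e4_15 e4_17 e4_22 e4_62 e4_64 e4_66 e4_67 e4_70 e4_72 e4_77
  clear c1 c2 c3 c4
  have z54 : d 5 4 = 0 := by
    linear_combination -1 * e1_00
  have z10 : d 1 0 = 0 := by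
    linear_combination -1 * e1_13
  have z23 : d 2 3 = 0 := by
    linear_combination 1 * e2_25
  have z52 : d 5 2 = 0 := by
    linear_combination -1 * e4_13 + 1 * e1_00
  have z11 : d 1 1 = 0 := by
    linear_combination 1 * e4_15 - 1 * e4_13
  have z16 : d 1 6 = 0 := by
    linear_combination 1 * e1_15 - 1 * e4_13 + 1 * e1_00
  have z06 : d 0 6 = 0 := by
    linear_combination -1 * e3_17 + 1 * e4_15 - 1 * e4_13
  have z60 : d 6 0 = 0 := by
    linear_combination 1 * e4_62 - 1 * e4_13 + 1 * e1_00
  have z53 : d 5 3 = 0 := by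
    linear_combination 1 * e1_62 - 1 * e4_62
  have z70 : d 7 0 = 0 := by
    linear_combination -1 * e1_72 + 1 * e4_62
  have z67 : d 6 7 = 0 := by
    linear_combination 1 * e4_67 + 2 * e4_62
  have z32 : d 3 2 = 0 := by
    linear_combination 1 * e4_72 - 1 * e1_72
  have z24 : d 2 4 = 0 := by
    linear_combination -1 * e1_25 - 1 * e4_72 + 1 * e1_72
  have z76 : d 7 6 = 0 := by
    linear_combination 1 * e2_71 + 1 * e1_72 - 1 * e4_62
  have z33 : d 3 3 = 0 := by
    linear_combination -1 * e4_22 - 1 * e4_72 + 1 * e1_72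
  have z66 : d 6 6 = 0 := by
    linear_combination -1 * e4_66 - 1 * e4_62 - 1 * e4_67
  have z55 : d 5 5 = 0 := by
    linear_combination 1 * e1_61 + 1 * e4_62 - 1 * e4_66
  have z25 : d 2 5 = 0 := by
    linear_combination -1 * e4_70 + 1 * e4_13 - 1 * e1_72
  have z44 : d 4 4 = 0 := by
    linear_combination 1 * e1_01 + 1 * e1_61 + 1 * e4_62 - 1 * e4_66
  have z34 : d 3 4 = 0 := by
    linear_combination -1 * e1_27 + 1 * e1_25 + 1 * e4_72 - 1 * e1_72
  have z45 : d 4 5 = 0 := by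
    linear_combination 1 * e4_17 - 1 * e1_00 - 2 * e1_62 + 2 * e4_62
  have z43 : d 4 3 = 0 := by
    linear_combination -1 * e4_64 - 1 * e2_25 - 1 * e4_62 + 1 * e4_13
  have z77 : d 7 7 = 0 := by
    linear_combination -1 * e4_77 - 2 * e1_72 + 1 * e4_67 + 2 * e4_62
  have z22 : d 2 2 = 0 := by
    linear_combination 1 * e2_42 + 1 * e1_01 + 1 * e1_61 + 1 * e4_62 - 1 * e4_66
  have z00 : d 0 0 = 0 := by
    linear_combination 1 * e2_07 - 1 * e4_67 - 2 * e4_62 - 1 * e4_77 - 2 * e1_72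
  have z42 : d 4 2 = 0 := by
    linear_combination -1 * e3_24 - 1 * e1_25 - 1 * e4_72 + 1 * e1_72 + 1 * e2_42
  have z71 : d 7 1 = 0 := by
    linear_combination 1 * e3_77 - 1 * e2_71 + 1 * e1_72 - 1 * e4_62 + 1 * e4_77 - 1 * e4_67
  have z35 : d 3 5 = 0 := by
    linear_combination -1 * e3_55 - 1 * e4_22 - 1 * e4_72 + 1 * e1_72 + 1 * e1_61 + 1 * e4_62 - 1 * e4_66
  have z01 : d 0 1 = 0 := by
    linear_combination 1 * e3_60 + 2 * e1_72 + 1 * e4_66 + 1 * e3_77 - 1 * e2_71 - 1 * e4_62 + 1 * e4_77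
  have z61 : d 6 1 = 0 := by
    linear_combination 1 * e3_67 - 1 * e3_17 + 1 * e4_15 - 1 * e4_13 - 2 * e4_67 - 2 * e4_62 - 1 * e2_71 - 1 * e1_72 - 1 * e4_66
  ext i j
  fin_cases i <;> fin_cases j <;> simp [dm, z54, z10, z23, z52, z11, z16, z06, z60, z53, z70, z67, z32, z24, z76, z33, z66, z55, z25, z44, z34, z45, z43, z77, z22, z00, z42, z71, z35, z01, z61]


theorem linear_part {S : Type*} [CommRing S] (D D1 D2 : Matrix (Fin 8) (Fin 8) S)
    (hb1 : ∀ i j : Fin 8, i ∈ ({0, 1, 6, 7} : Finset (Fin 8)) →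
      j ∉ ({0, 1, 6, 7} : Finset (Fin 8)) → D i j = 0)
    (hb2 : ∀ i j : Fin 8, i ∈ ({2, 3, 4, 5} : Finset (Fin 8)) →
      j ∉ ({2, 3, 4, 5} : Finset (Fin 8)) → D i j = 0)
    (h07 : D 0 7 = 0) (h17 : D 1 7 = 0)
    (hD1 : D1 = w₂ S * D * v₂ S) (hD2 : D2 = w₁ S * D1 * v₁ S)
    (c1 : D * XX1 S + XX S * D1 = D1 * XX S + XX1 S * D)
    (c2 : hh S * D * hh S * XX S + XH S * D = 0)
    (c3 : D * XW S + XX S * (w₁ S * D * v₁ S) = w₁ S * (hh S * D * hh S))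
    (c4 : D2 * XX S + XX2 S * D = D1 * XZ S + XX1 S * D * XX2 S + XU S * D2) :
    D = 0 := by
  obtain ⟨d, rfl⟩ : ∃ d : Fin 8 → Fin 8 → S, D = dm d := by
    refine ⟨fun i j => D i j, ?_⟩
    ext i j
    fin_cases i <;> fin_cases j <;>
      first
        | rfl
        | exact h07
        | exact h17
        | exact hb1 _ _ (by decide) (by decide)
        | exact hb2 _ _ (by decide) (by decide)
  rw [dA_eq, dD1_eq] at hD1
  subst hD1
  rw [dB_eq, dD2_eq] at hD2
  subst hD2
  rw [dC_eq, dE_eq] at c2 c3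
  rw [dG0_eq, dG_eq, dK_eq] at c3
  rw [dT_eq] at c4
  exact linear_core d c1 c2 c3 c4
/-- If `(X + D)` satisfies the relations and `D * M * D = 0` for all `M`, then `D = 0`. -/
theorem square_zero {S : Type*} [CommRing S] (D : Matrix (Fin 8) (Fin 8) S)
    (hDD : ∀ M : Matrix (Fin 8) (Fin 8) S, D * M * D = 0)
    (hb1 : ∀ i j : Fin 8, i ∈ ({0, 1, 6, 7} : Finset (Fin 8)) →
      j ∉ ({0, 1, 6, 7} : Finset (Fin 8)) → D i j = 0)
    (hb2 : ∀ i j : Fin 8, i ∈ ({2, 3, 4, 5} : Finset (Fin 8)) →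
      j ∉ ({2, 3, 4, 5} : Finset (Fin 8)) → D i j = 0)
    (h07 : D 0 7 = 0) (h17 : D 1 7 = 0)
    (c1 : (XX S + D) * (w₂ S * (XX S + D) * v₂ S) = (w₂ S * (XX S + D) * v₂ S) * (XX S + D))
    (c2 : hh S * (XX S + D) * hh S * (XX S + D) = 1)
    (c3 : (XX S + D) * w₁ S * (XX S + D) * v₁ S = w₁ S * hh S * (XX S + D) * hh S)
    (c4 : (w₁ S * (w₂ S * (XX S + D) * v₂ S) * v₁ S) * (XX S + D)
      = (w₂ S * (XX S + D) * v₂ S) * (XX S + D) * (w₁ S * (w₂ S * (XX S + D) * v₂ S) * v₁ S)) :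
    D = 0 := by
  have k1 : w₂ S * (XX S + D) * v₂ S = XX1 S + w₂ S * D * v₂ S := by
    rw [mul_add, add_mul, w2_XX, Matrix.mul_assoc (XX1 S), w2_v2, Matrix.mul_one]
  have k2 : w₁ S * (XX1 S + w₂ S * D * v₂ S) * v₁ S
      = XX2 S + w₁ S * (w₂ S * D * v₂ S) * v₁ S := by
    rw [mul_add, add_mul, w1_XX1, Matrix.mul_assoc (XX2 S), w1_v1, Matrix.mul_one]
  have k3 : hh S * (XX S + D) * hh S = XH S + hh S * D * hh S := by
    rw [mul_add, add_mul, hh_XX, Matrix.mul_assoc (XH S), hh_hh, Matrix.mul_one]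
  have k4 : w₁ S * (XX S + D) * v₁ S = XW S + w₁ S * D * v₁ S := by
    rw [mul_add, add_mul, w1_XX, Matrix.mul_assoc (XW S), w1_v1, Matrix.mul_one]
  have c3' : (XX S + D) * (w₁ S * (XX S + D) * v₁ S) = w₁ S * (hh S * (XX S + D) * hh S) := by
    simpa only [Matrix.mul_assoc] using c3
  rw [k1] at c1
  rw [k3] at c2
  rw [k3, k4] at c3'
  rw [k1, k2] at c4
  have x1 : XX S * XX1 S = XX1 S * XX S := (XX_XX1 S).trans (XX1_XX S).symm
  have x2 := XH_XX S
  have x3 := XX_XW S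
  have x4 : XX2 S * XX S = XX1 S * XX S * XX2 S := by
    rw [XX2_XX, Matrix.mul_assoc, XX_XX2]
  refine linear_part D (w₂ S * D * v₂ S) (w₁ S * (w₂ S * D * v₂ S) * v₁ S) hb1 hb2 h07 h17 rfl rfl
    ?_ ?_ ?_ ?_
  · have a1 : D * (w₂ S * D * v₂ S) = 0 := by
      rw [← Matrix.mul_assoc, ← Matrix.mul_assoc, hDD, Matrix.zero_mul]
    have a2 : (w₂ S * D * v₂ S) * D = 0 := by
      rw [Matrix.mul_assoc, Matrix.mul_assoc, ← Matrix.mul_assoc D, hDD, Matrix.mul_zero]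
    generalize w₂ S * D * v₂ S = E at *
    simp only [mul_add, add_mul, a1, a2, x1] at c1
    rw [← sub_eq_zero] at c1 ⊢
    rw [← c1]; abel
  · have a1 : hh S * D * hh S * D = 0 := by
      rw [Matrix.mul_assoc, Matrix.mul_assoc, ← Matrix.mul_assoc D, hDD, Matrix.mul_zero]
    simp only [mul_add, add_mul, a1, x2] at c2
    rw [← sub_eq_zero] at c2
    rw [← c2]; abel
  · have a1 : D * (w₁ S * D * v₁ S) = 0 := by
      rw [← Matrix.mul_assoc, ← Matrix.mul_assoc, hDD, Matrix.zero_mul]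
    clear c1 c2 c4
    simp only [mul_add, add_mul, a1, x3] at c3'
    rw [← sub_eq_zero] at c3' ⊢
    rw [← c3']
    abel
  · have a1 : (w₁ S * (w₂ S * D * v₂ S) * v₁ S) * D = 0 := by
      have : (w₁ S * (w₂ S * D * v₂ S) * v₁ S) * D = w₁ S * w₂ S * (D * (v₂ S * v₁ S) * D) := by
        simp only [Matrix.mul_assoc]
      rw [this, hDD, Matrix.mul_zero]
    have a2 : (w₂ S * D * v₂ S) * D = 0 := by
      rw [Matrix.mul_assoc, Matrix.mul_assoc, ← Matrix.mul_assoc D, hDD, Matrix.mul_zero]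
    have a3 : ∀ M, (w₂ S * D * v₂ S) * M * (w₁ S * (w₂ S * D * v₂ S) * v₁ S) = 0 := by
      intro M
      have : (w₂ S * D * v₂ S) * M * (w₁ S * (w₂ S * D * v₂ S) * v₁ S)
          = w₂ S * (D * (v₂ S * M * w₁ S * w₂ S) * D) * (v₂ S * v₁ S) := by
        simp only [Matrix.mul_assoc]
      rw [this, hDD, Matrix.mul_zero, Matrix.zero_mul]
    have a4 : ∀ M, M * D * (w₁ S * (w₂ S * D * v₂ S) * v₁ S) = 0 := by
      intro M
      have : M * D * (w₁ S * (w₂ S * D * v₂ S) * v₁ S)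
          = M * (D * (w₁ S * w₂ S) * D) * (v₂ S * v₁ S) := by
        simp only [Matrix.mul_assoc]
      rw [this, hDD, Matrix.mul_zero, Matrix.zero_mul]
    generalize w₁ S * (w₂ S * D * v₂ S) * v₁ S = F at *
    generalize w₂ S * D * v₂ S = E at *
    simp only [mul_add, add_mul, a1, a2, a3, a4, x4, Matrix.zero_mul] at c4
    rw [← sub_eq_zero] at c4 ⊢
    rw [← c4, ← XX_XX2, ← XX1_XX]
    simp only [← Matrix.mul_assoc]
    abel

theorem map_m1 {R S : Type*} [CommRing R] [CommRing S] (f : R →+* S) :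
    (w₁ R).map f = w₁ S := by
  ext i j
  fin_cases i <;> fin_cases j <;> simp [w₁]

theorem map_m2 {R S : Type*} [CommRing R] [CommRing S] (f : R →+* S) :
    (w₂ R).map f = w₂ S := by
  ext i j
  fin_cases i <;> fin_cases j <;> simp [w₂]

theorem map_m3 {R S : Type*} [CommRing R] [CommRing S] (f : R →+* S) :
    (v₁ R).map f = v₁ S := by
  ext i j
  fin_cases i <;> fin_cases j <;> simp [v₁]

theorem map_m4 {R S : Type*} [CommRing R] [CommRing S] (f : R →+* S) :
    (v₂ R).map f = v₂ S := by
  ext i j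
  fin_cases i <;> fin_cases j <;> simp [v₂]

theorem map_m5 {R S : Type*} [CommRing R] [CommRing S] (f : R →+* S) :
    (hh R).map f = hh S := by
  ext i j
  fin_cases i <;> fin_cases j <;> simp [hh]

theorem map_m6 {R S : Type*} [CommRing R] [CommRing S] (f : R →+* S) :
    (XX R).map f = XX S := by
  ext i j
  fin_cases i <;> fin_cases j <;> simp [XX, map_ofNat]

/-- Over a commutative local ring `R` with `2` invertible (maximal
ideal `J`), let `x` be an `8 × 8` matrix with (i) `x ≡ X (mod J)`; (ii) the entries of
`x` in rows `1,2,7,8` vanish outside columns `1,2,7,8` and those in rows `3,4,5,6`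
vanish outside columns `3,4,5,6`; (iii) `x₁₈ = 1` and `x₂₈ = 0`.  Put
`x' = w₂·x·w₂⁻¹`, `x'' = w₁·x'·w₁⁻¹`, `h₂ = w₂·w₂`.  If `x·x' = x'·x`,
`h₂·x·h₂·x = 1`, `x·w₁·x·w₁⁻¹ = w₁·h₂·x·h₂` and `x''·x = x'·x·x''`, then `x = X`. -/
theorem stmt11 {R : Type*} [CommRing R] [IsLocalRing R] [Invertible (2 : R)]
    (x : Matrix (Fin 8) (Fin 8) R)
    (hmod : ∀ i j, (x - XX R) i j ∈ IsLocalRing.maximalIdeal R)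
    (hblock1 : ∀ i j : Fin 8, i ∈ ({0, 1, 6, 7} : Finset (Fin 8)) →
      j ∉ ({0, 1, 6, 7} : Finset (Fin 8)) → x i j = 0)
    (hblock2 : ∀ i j : Fin 8, i ∈ ({2, 3, 4, 5} : Finset (Fin 8)) →
      j ∉ ({2, 3, 4, 5} : Finset (Fin 8)) → x i j = 0)
    (h18 : x 0 7 = 1) (h28 : x 1 7 = 0)
    (hcon1 : x * (w₂ R * x * (w₂ R)⁻¹) = (w₂ R * x * (w₂ R)⁻¹) * x)
    (hcon2 : (w₂ R * w₂ R) * x * (w₂ R * w₂ R) * x = 1)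
    (hcon3 : x * w₁ R * x * (w₁ R)⁻¹ = w₁ R * (w₂ R * w₂ R) * x * (w₂ R * w₂ R))
    (hcon4 : (w₁ R * (w₂ R * x * (w₂ R)⁻¹) * (w₁ R)⁻¹) * x
      = (w₂ R * x * (w₂ R)⁻¹) * x * (w₁ R * (w₂ R * x * (w₂ R)⁻¹) * (w₁ R)⁻¹)) :
    x = XX R := by
  have i1 : (w₁ R)⁻¹ = v₁ R := Matrix.inv_eq_right_inv (w1_v1 R)
  have i2 : (w₂ R)⁻¹ = v₂ R := Matrix.inv_eq_right_inv (w2_v2 R)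
  rw [i2] at hcon1
  rw [w2_w2] at hcon2
  rw [w2_w2, i1] at hcon3
  rw [i1, i2] at hcon4
  -- the ideal generated by the entries of the difference
  let J := IsLocalRing.maximalIdeal R
  let I : Ideal R := Ideal.span (Set.range fun p : Fin 8 × Fin 8 => (x - XX R) p.1 p.2)
  have hI : ∀ i j, (x - XX R) i j ∈ I := fun i j => Ideal.subset_span ⟨(i, j), rfl⟩
  let f := Ideal.Quotient.mk (J * I)
  have m1 := map_m1 f
  have m2 := map_m2 f
  have m3 := map_m3 f
  have m4 := map_m4 f
  have m5 := map_m5 f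
  have m6 := map_m6 f
  have mx : x.map f = XX _ + (x - XX R).map f := by
    rw [← m6]
    ext i j
    simp
  have hx : ∀ i j, x i j = XX R i j → (x - XX R).map f i j = 0 := by
    intro i j h
    simp [h]
  have key : (x - XX R).map f = 0 := by
    apply square_zero
    · intro M
      ext i j
      rw [Matrix.mul_apply]
      refine Finset.sum_eq_zero fun k _ => ?_
      rw [Matrix.mul_apply, Finset.sum_mul]
      refine Finset.sum_eq_zero fun l _ => ?_
      have h0 : f ((x - XX R) i l) * f ((x - XX R) k j) = 0 := by
        rw [← map_mul]
        exact Ideal.Quotient.eq_zero_iff_mem.2 (Ideal.mul_mem_mul (hmod i l) (hI k j))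
      rw [Matrix.map_apply, Matrix.map_apply, mul_right_comm, h0, zero_mul]
    · intro i j hi hj
      apply hx
      rw [hblock1 i j hi hj]
      fin_cases i <;> fin_cases j <;> simp [XX] at hi hj ⊢
    · intro i j hi hj
      apply hx
      rw [hblock2 i j hi hj]
      fin_cases i <;> fin_cases j <;> simp [XX] at hi hj ⊢
    · apply hx
      rw [h18]
      simp [XX]
    · apply hx
      rw [h28]
      simp [XX]
    · have := congrArg (fun M => M.map f) hcon1
      simpa only [Matrix.map_mul, m1, m2, m3, m4, m5, mx] using this
    · have := congrArg (fun M => M.map f) hcon2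
      simpa only [Matrix.map_mul, m1, m2, m3, m4, m5, mx,
        Matrix.map_one f (map_zero f) (map_one f)] using this
    · have := congrArg (fun M => M.map f) hcon3
      simpa only [Matrix.map_mul, m1, m2, m3, m4, m5, mx] using this
    · have := congrArg (fun M => M.map f) hcon4
      simpa only [Matrix.map_mul, m1, m2, m3, m4, m5, mx] using this
  have hle : I ≤ J • I := by
    rw [smul_eq_mul]
    refine Ideal.span_le.2 ?_
    rintro _ ⟨p, rfl⟩
    have := congr_fun (congr_fun key p.1) p.2
    rw [Matrix.map_apply] at this
    exact Ideal.Quotient.eq_zero_iff_mem.1 this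
  have hfg : I.FG := Submodule.fg_span (Set.finite_range _)
  have hbot : I = ⊥ := Submodule.eq_bot_of_le_smul_of_le_jacobson_bot J I hfg hle
    (IsLocalRing.maximalIdeal_le_jacobson _)
  ext i j
  have := hI i j
  rw [hbot] at this
  exact sub_eq_zero.1 (by simpa using this)
end

section
/- Let M be an n×n matrix over R with M² = 1 and M ≡ 1 (mod J). Then M = 1. -/
/-- Over a commutative local ring `R` with `2` invertible (maximal
ideal `J`), if `M` is an `n × n` matrix with `M² = 1` and `M ≡ 1 (mod J)`, then
`M = 1`. -/
theorem stmt14 {R : Type*} [CommRing R] [IsLocalRing R] [Invertible (2 : R)]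
    {n : ℕ} (M : Matrix (Fin n) (Fin n) R) (hM : M * M = 1)
    (hmod : ∀ i j, (M - 1) i j ∈ IsLocalRing.maximalIdeal R) :
    M = 1 := by
  have hmap : (IsLocalRing.residue R).mapMatrix (M - 1) = 0 := by
    ext i j
    exact (IsLocalRing.residue_eq_zero_iff _).2 (hmod i j)
  have hM1 : (IsLocalRing.residue R).mapMatrix M = 1 := by
    rw [map_sub, map_one, sub_eq_zero] at hmap
    exact hmap
  have h2 : IsUnit (IsLocalRing.residue R 2) :=
    (isUnit_of_invertible (2 : R)).map _
  have hdet : IsUnit (M + 1).det := by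
    apply isUnit_of_map_unit (IsLocalRing.residue R)
    rw [RingHom.map_det, map_add, hM1, map_one]
    have : (1 + 1 : Matrix (Fin n) (Fin n) (IsLocalRing.ResidueField R))
        = (IsLocalRing.residue R 2) • 1 := by
      rw [map_ofNat, two_smul]
    rw [this, Matrix.det_smul, Matrix.det_one, mul_one]
    exact h2.pow _
  have hu : IsUnit (M + 1) := (Matrix.isUnit_iff_isUnit_det _).2 hdet
  have h0 : (M - 1) * (M + 1) = 0 := by
    have : (M - 1) * (M + 1) = M * M - 1 := by noncomm_ring
    rw [this, hM, sub_self]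
  exact sub_eq_zero.1 ((hu.mul_left_eq_zero).1 h0)
end

section
/- Let b be an n×n matrix over R with b² = 1, and let L ⊆ R^n be a free rank-1 submodule that is a direct summand of R^n and is invariant under b (b·L ⊆ L). Then either b·x = x for all x ∈ L, or b·x = −x for all x ∈ L. -/
/-- Over a commutative local ring `R` with `2` invertible, let `b` be
an `n × n` matrix with `b² = 1`, and let `L ⊆ R^n` be a free rank-one submodule which
is a direct summand of `R^n` and is invariant under `b`.  Then either `b` fixes every
element of `L`, or `b` negates every element of `L`. -/
theorem stmt15 {R : Type*} [CommRing R] [IsLocalRing R] [Invertible (2 : R)]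
    {n : ℕ} (b : Matrix (Fin n) (Fin n) R) (hb : b * b = 1)
    (L : Submodule R (Fin n → R))
    (hfree : Module.Free R L) (hrank : Module.rank R L = 1)
    (hsumm : ∃ L' : Submodule R (Fin n → R), IsCompl L L')
    (hinvar : ∀ x ∈ L, b.mulVec x ∈ L) :
    (∀ x ∈ L, b.mulVec x = x) ∨ (∀ x ∈ L, b.mulVec x = -x) := by
  have hfin : Module.finrank R L = 1 := by simp [Module.finrank, hrank]
  let B := Module.basisUnique Unit hfin
  set v : L := B () with hv
  have hrep : ∀ x : L, x = B.repr x () • v := by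
    intro x
    have h := B.sum_repr x
    simpa using h.symm
  have hinj : ∀ r : R, r • (v : Fin n → R) = 0 → r = 0 := by
    intro r hr
    have h1 : r • v = 0 := Subtype.ext (by simpa using hr)
    have h2 := congrArg (fun y => B.repr y ()) h1
    simpa [hv] using h2
  obtain ⟨c, hc⟩ : ∃ c : R, b.mulVec (v : Fin n → R) = c • (v : Fin n → R) :=
    ⟨_, congrArg Subtype.val (hrep ⟨_, hinvar v v.2⟩)⟩
  have hall : ∀ x ∈ L, b.mulVec x = c • x := by
    intro x hx
    have h : x = B.repr ⟨x, hx⟩ () • (v : Fin n → R) :=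
      congrArg Subtype.val (hrep ⟨x, hx⟩)
    generalize B.repr ⟨x, hx⟩ () = r at h
    rw [h, Matrix.mulVec_smul, hc, smul_comm]
  have hcc : c * c - 1 = 0 := by
    apply hinj
    have h : b.mulVec (b.mulVec (v : Fin n → R)) = v := by
      rw [Matrix.mulVec_mulVec, hb, Matrix.one_mulVec]
    rw [hc, Matrix.mulVec_smul, hc, smul_smul] at h
    rw [sub_smul, h, one_smul, sub_self]
  have hu : IsUnit ((1 + c) + (1 - c)) := by
    have h2 : (1 + c) + (1 - c) = 2 := by ring
    rw [h2]
    exact isUnit_of_invertible 2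
  rcases IsLocalRing.isUnit_or_isUnit_of_isUnit_add hu with h | h
  · left
    have h1 : c - 1 = 0 := (h.mul_right_eq_zero).1 (by linear_combination hcc)
    intro x hx
    rw [hall x hx, sub_eq_zero.1 h1, one_smul]
  · right
    have h1 : c + 1 = 0 := (h.mul_right_eq_zero).1 (by linear_combination -hcc)
    intro x hx
    rw [hall x hx, eq_neg_of_add_eq_zero_left h1, neg_smul, one_smul]
end
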